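/- arXiv:2004.08895 — 4 statements merged into one kernel-verified Lean document; each statement's English description precedes it below -/
import Mathlib

section
/- Let f be analytic on the open unit disk with |f(z)| < 1 there. Then for every k ≥ 1 and every z with |z| < 1, |f⁽ᵏ⁾(z)|/k! ≤ (1 - |f(z)|²)/((1 - |z|)ᵏ (1 + |z|)). -/
open Complex Metric ComplexConjugate

theorem differentiableOn_iteratedDeriv_of_isOpen {f : ℂ → ℂ} {s : Set ℂ} (hs : IsOpen s)
    (hf : DifferentiableOn ℂ f s) (n : ℕ) : DifferentiableOn ℂ (iteratedDeriv n f) s := by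
  induction n with
  | zero => simpa using hf
  | succ n ih =>
    rw [iteratedDeriv_succ]
    exact ih.deriv hs

theorem hasDerivAt_iteratedDeriv_of_isOpen {f : ℂ → ℂ} {s : Set ℂ} (hs : IsOpen s)
    (hf : DifferentiableOn ℂ f s) (n : ℕ) {w : ℂ} (hw : w ∈ s) :
    HasDerivAt (iteratedDeriv n f) (iteratedDeriv (n + 1) f w) w := by
  rw [iteratedDeriv_succ]
  exact ((differentiableOn_iteratedDeriv_of_isOpen hs hf n).differentiableAt
    (hs.mem_nhds hw)).hasDerivAt

theorem iteratedDeriv_succ_one_add_mul_mul {G : ℂ → ℂ} {s : Set ℂ} (hs : IsOpen s)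
    (hG : DifferentiableOn ℂ G s) (b : ℂ) (n : ℕ) :
    ∀ w ∈ s, iteratedDeriv (n + 1) (fun w => (1 + b * w) * G w) w =
      (1 + b * w) * iteratedDeriv (n + 1) G w + (n + 1) * b * iteratedDeriv n G w := by
  have hlin (w : ℂ) : HasDerivAt (fun w => 1 + b * w) b w := by
    simpa using ((hasDerivAt_id w).const_mul b).const_add 1
  induction n with
  | zero =>
    intro w hw
    have h := (hlin w).mul (hasDerivAt_iteratedDeriv_of_isOpen hs hG 0 hw)
    simp only [iteratedDeriv_zero] at h
    rw [iteratedDeriv_succ, iteratedDeriv_zero]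
    refine h.deriv.trans ?_
    simp
    ring
  | succ n ih =>
    intro w hw
    rw [iteratedDeriv_succ, (Set.EqOn.eventuallyEq_of_mem ih (hs.mem_nhds hw)).deriv_eq]
    have h := ((hlin w).mul (hasDerivAt_iteratedDeriv_of_isOpen hs hG (n + 1) hw)).add
      ((hasDerivAt_iteratedDeriv_of_isOpen hs hG n hw).const_mul (((n : ℂ) + 1) * b))
    refine h.deriv.trans ?_
    push_cast
    ring

theorem one_add_conj_mul_ne_zero {a w : ℂ} (ha : ‖a‖ < 1) (hw : ‖w‖ < 1) :
    1 + conj a * w ≠ 0 := by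
  intro h
  have h1 : conj a * w = -1 := by linear_combination h
  have h2 : ‖a‖ * ‖w‖ = 1 := by simpa using congrArg norm h1
  nlinarith [norm_nonneg a, norm_nonneg w]

theorem norm_add_div_one_add_conj_mul_lt_one {a w : ℂ} (ha : ‖a‖ < 1) (hw : ‖w‖ < 1) :
    ‖(a + w) / (1 + conj a * w)‖ < 1 := by
  have hne := one_add_conj_mul_ne_zero ha hw
  rw [norm_div, div_lt_one (norm_pos_iff.mpr hne)]
  refine lt_of_pow_lt_pow_left₀ 2 (norm_nonneg _) ?_
  have key : ‖1 + conj a * w‖ ^ 2 - ‖a + w‖ ^ 2 = (1 - ‖a‖ ^ 2) * (1 - ‖w‖ ^ 2) := by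
    simp only [← normSq_eq_norm_sq, normSq_apply]
    simp
    ring
  have : 0 < (1 - ‖a‖ ^ 2) * (1 - ‖w‖ ^ 2) := by
    apply mul_pos <;> nlinarith [norm_nonneg a, norm_nonneg w]
  linarith

theorem hasDerivAt_add_div_one_add_conj_mul {a w : ℂ} (ha : ‖a‖ < 1) (hw : ‖w‖ < 1) :
    HasDerivAt (fun w => (a + w) / (1 + conj a * w))
      ((1 - a * conj a) / (1 + conj a * w) ^ 2) w := by
  have hne := one_add_conj_mul_ne_zero ha hw
  have h := ((hasDerivAt_id w).const_add a).div
    (((hasDerivAt_id w).const_mul (conj a)).const_add 1) hne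
  refine h.congr_deriv ?_
  simp only [id]
  ring

/-- Bol's lemma for a disk automorphism. -/
theorem iteratedDeriv_succ_pow_mul_comp_disk_automorphism {f : ℂ → ℂ}
    (hf : DifferentiableOn ℂ f (ball 0 1)) {a : ℂ} (ha : ‖a‖ < 1) (k : ℕ) :
    ∀ w ∈ ball (0 : ℂ) 1,
      iteratedDeriv (k + 1)
          (fun w => (1 + conj a * w) ^ k * f ((a + w) / (1 + conj a * w))) w =
        iteratedDeriv (k + 1) f ((a + w) / (1 + conj a * w)) * (1 - a * conj a) ^ (k + 1) /
          (1 + conj a * w) ^ (k + 2) := by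
  have hmaps {w : ℂ} (hw : w ∈ ball (0 : ℂ) 1) :
      (a + w) / (1 + conj a * w) ∈ ball (0 : ℂ) 1 := by
    simpa only [mem_ball_zero_iff] using
      norm_add_div_one_add_conj_mul_lt_one ha (by simpa using hw)
  have hcomp (n : ℕ) {w : ℂ} (hw : w ∈ ball (0 : ℂ) 1) :
      HasDerivAt (fun w => iteratedDeriv n f ((a + w) / (1 + conj a * w)))
        (iteratedDeriv (n + 1) f ((a + w) / (1 + conj a * w)) *
          ((1 - a * conj a) / (1 + conj a * w) ^ 2)) w :=
    HasDerivAt.comp (h₂ := iteratedDeriv n f) w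
      (hasDerivAt_iteratedDeriv_of_isOpen isOpen_ball hf n (hmaps hw))
      (hasDerivAt_add_div_one_add_conj_mul ha (by simpa using hw))
  have hlin (w : ℂ) : HasDerivAt (fun w => 1 + conj a * w) (conj a) w := by
    simpa using ((hasDerivAt_id w).const_mul (conj a)).const_add 1
  induction k with
  | zero =>
    intro w hw
    have h := hcomp 0 hw
    simp only [iteratedDeriv_zero] at h
    rw [iteratedDeriv_succ, iteratedDeriv_zero]
    simp only [pow_zero, one_mul, zero_add, pow_one]
    rw [h.deriv]
    ring
  | succ k ih =>
    intro w hw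
    have hne := one_add_conj_mul_ne_zero ha (show ‖w‖ < 1 by simpa using hw)
    have hG : DifferentiableOn ℂ
        (fun w => (1 + conj a * w) ^ k * f ((a + w) / (1 + conj a * w))) (ball 0 1) := by
      intro w hw
      have h := hcomp 0 hw
      simp only [iteratedDeriv_zero] at h
      exact (((hlin w).pow k).mul h).differentiableAt.differentiableWithinAt
    have heq : (fun w => (1 + conj a * w) ^ (k + 1) * f ((a + w) / (1 + conj a * w))) =
        fun w => (1 + conj a * w) *
          ((1 + conj a * w) ^ k * f ((a + w) / (1 + conj a * w))) := by
      funext w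
      ring
    rw [heq, iteratedDeriv_succ_one_add_mul_mul isOpen_ball hG _ _ w hw, iteratedDeriv_succ,
      (Set.EqOn.eventuallyEq_of_mem ih (isOpen_ball.mem_nhds hw)).deriv_eq, ih w hw]
    have h := ((hcomp (k + 1) hw).mul_const ((1 - a * conj a) ^ (k + 1))).div
      ((hlin w).pow (k + 2)) (pow_ne_zero _ hne)
    rw [show deriv (fun w => iteratedDeriv (k + 1) f ((a + w) / (1 + conj a * w)) *
      (1 - a * conj a) ^ (k + 1) / (1 + conj a * w) ^ (k + 2)) w = _ from h.deriv]
    simp only [Nat.add_one_sub_one, Pi.pow_apply]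
    push_cast
    field_simp
    ring

theorem norm_iteratedDeriv_one_add_mul_pow_mul_le {g : ℂ → ℂ}
    (hg : DifferentiableOn ℂ g (ball 0 1)) {b : ℂ} {A : ℝ}
    (hA : ∀ n : ℕ, 1 ≤ n → ‖iteratedDeriv n g 0‖ ≤ n.factorial * A) (m : ℕ) :
    ∀ n : ℕ, m + 1 ≤ n → ‖iteratedDeriv n (fun w => (1 + b * w) ^ m * g w) 0‖ ≤
      n.factorial * ((1 + ‖b‖) ^ m * A) := by
  induction m with
  | zero => simpa using hA
  | succ m ih =>
    intro n hn
    obtain ⟨n, rfl⟩ : ∃ l, n = l + 1 := ⟨n - 1, by omega⟩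
    have heq : (fun w => (1 + b * w) ^ (m + 1) * g w) =
        fun w => (1 + b * w) * ((1 + b * w) ^ m * g w) := by
      funext w
      ring
    have hG : DifferentiableOn ℂ (fun w => (1 + b * w) ^ m * g w) (ball 0 1) := by
      fun_prop
    rw [heq, iteratedDeriv_succ_one_add_mul_mul isOpen_ball hG b n 0 (by simp)]
    have h1 := ih (n + 1) (by omega)
    have h2 := ih n (by omega)
    have h3 : ‖((n : ℂ) + 1) * b‖ = (n + 1) * ‖b‖ := by
      rw [norm_mul]
      norm_cast
    calc _ ≤ ‖iteratedDeriv (n + 1) (fun w => (1 + b * w) ^ m * g w) 0‖ +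
          (n + 1) * ‖b‖ * ‖iteratedDeriv n (fun w => (1 + b * w) ^ m * g w) 0‖ := by
            refine (norm_add_le _ _).trans_eq ?_
            rw [norm_mul (_ * b), h3]
            simp
      _ ≤ (n + 1).factorial * ((1 + ‖b‖) ^ m * A) +
          (n + 1) * ‖b‖ * (n.factorial * ((1 + ‖b‖) ^ m * A)) := by gcongr
      _ = _ := by
        rw [Nat.factorial_succ]
        push_cast
        ring

theorem circleAverage_div_pow_eq_iteratedDeriv {g : ℂ → ℂ} {ρ : ℝ} (hρ : 0 < ρ)
    (hg : DiffContOnCl ℂ g (ball 0 ρ)) (n : ℕ) :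
    Real.circleAverage (fun z => g z / z ^ n) 0 ρ = iteratedDeriv n g 0 / n.factorial := by
  have h := hg.circleIntegral_one_div_sub_center_pow_smul hρ n
  rw [Real.circleAverage_eq_circleIntegral hρ.ne']
  have h2 : (fun z : ℂ => (z - 0)⁻¹ • (g z / z ^ n)) =
      fun z => (1 / (z - 0) ^ (n + 1)) • g z := by
    funext z
    simp only [sub_zero, smul_eq_mul, pow_succ, mul_inv, div_eq_mul_inv]
    ring
  rw [h2, h]
  simp only [smul_eq_mul]
  have := Real.pi_ne_zero
  field_simp

theorem norm_iteratedDeriv_div_factorial_le_one_sub_sq {g : ℂ → ℂ}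
    (hg : DifferentiableOn ℂ g (ball 0 1)) (hb : ∀ z : ℂ, ‖z‖ < 1 → ‖g z‖ ≤ 1)
    {n : ℕ} (hn : 1 ≤ n) :
    ‖iteratedDeriv n g 0 / n.factorial‖ ≤ 1 - ‖g 0‖ ^ 2 := by
  set c := g 0 with hc
  set d := iteratedDeriv n g 0 / n.factorial with hd
  obtain ⟨v, hv, hvd⟩ : ∃ v : ℂ, ‖v‖ = 1 ∧ conj v * d = ‖d‖ := by
    rcases eq_or_ne d 0 with h0 | h0
    · exact ⟨1, by simp, by simp [h0]⟩
    · have hn0 : (‖d‖ : ℂ) ≠ 0 := by simpa using h0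
      refine ⟨d / ‖d‖, by simp [h0], ?_⟩
      rw [map_div₀, conj_ofReal, div_mul_eq_mul_div, conj_mul', sq, mul_div_assoc,
        div_self hn0, mul_one]
  have key (ρ : ℝ) (hρ : 0 < ρ) (hρ1 : ρ < 1) : ρ ^ n * ‖d‖ ≤ 1 - ‖c‖ ^ 2 := by
    have hρC : (ρ : ℂ) ≠ 0 := by exact_mod_cast hρ.ne'
    have hcl : closedBall (0 : ℂ) ρ ⊆ ball 0 1 := closedBall_subset_ball hρ1
    have hgcl : DiffContOnCl ℂ g (ball 0 ρ) := (hg.mono hcl).diffContOnCl_ball subset_rfl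
    set F : ℂ → ℂ := fun z => 1 + ‖c‖ ^ 2 + 2 * conj c * v * (z ^ n / ρ ^ n) -
      g z * (2 * conj c + conj c ^ 2 * v * (z ^ n / ρ ^ n)) with hF
    set E : ℂ → ℂ := fun z => (-(conj v * ρ ^ n)) • (g z / z ^ n) with hE
    have hFd : DifferentiableOn ℂ F (ball 0 1) := by fun_prop
    have hFcl : DiffContOnCl ℂ F (ball 0 ρ) := (hFd.mono hcl).diffContOnCl_ball subset_rfl
    have hsph : sphere (0 : ℂ) ρ ⊆ ball 0 1 := sphere_subset_closedBall.trans hcl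
    have hFi : CircleIntegrable F 0 ρ :=
      (hFd.continuousOn.mono hsph).circleIntegrable hρ.le
    have hEi : CircleIntegrable E 0 ρ := by
      refine ContinuousOn.circleIntegrable hρ.le ?_
      simp only [hE, smul_eq_mul]
      refine continuousOn_const.mul ?_
      refine (hg.continuousOn.mono hsph).div (by fun_prop) fun z hz => pow_ne_zero _ ?_
      exact ne_of_mem_sphere hz hρ.ne'
    have hFav : Real.circleAverage F 0 ρ = 1 - ‖c‖ ^ 2 := by
      rw [DiffContOnCl.circleAverage (by rwa [abs_of_pos hρ])]
      simp only [hF, ← hc, zero_pow (by omega : n ≠ 0)]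
      linear_combination (-2 : ℂ) * mul_conj' c
    have hEav : Real.circleAverage E 0 ρ = -(ρ ^ n * ‖d‖ : ℝ) := by
      rw [hE, Real.circleAverage_fun_smul, circleAverage_div_pow_eq_iteratedDeriv hρ hgcl, ← hd]
      push_cast
      rw [← hvd, smul_eq_mul]
      ring
    have hre := reCLM.circleAverage_comp_comm (hFi.add hEi)
    rw [Real.circleAverage_add hFi hEi, hFav, hEav] at hre
    have hnn : 0 ≤ Real.circleAverage (reCLM ∘ (F + E)) 0 ρ := by
      refine Real.circleAverage_nonneg_of_nonneg fun z hz => ?_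
      rw [abs_of_pos hρ] at hz
      have hz0 : z ≠ 0 := ne_of_mem_sphere hz hρ.ne'
      have hzn : ‖z‖ = ρ := by simpa using hz
      obtain ⟨w, hw, hwn⟩ : ∃ w : ℂ, w = v * (z ^ n / ρ ^ n) ∧ ‖w‖ = 1 := by
        refine ⟨_, rfl, ?_⟩
        simp [hv, hzn, abs_of_pos hρ, hρ.ne']
      have hww : conj w = conj v * (ρ ^ n / z ^ n) := by
        have h1 : conj w * w = 1 := by rw [conj_mul', hwn]; simp
        have h2 : conj v * v = 1 := by rw [conj_mul', hv]; simp
        have hw0 : w ≠ 0 := by rw [← norm_pos_iff, hwn]; exact one_pos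
        refine mul_right_cancel₀ hw0 (h1.trans ?_)
        rw [hw, ← h2]
        field_simp
      have hsum : (F + E) z = (1 + ‖c‖ ^ 2 + 2 * (conj c * w)) -
          g z * ((1 + conj c * w) * (conj c + conj w)) := by
        have h1 : w * conj w = 1 := by rw [mul_conj', hwn]; simp
        have h3 : E z = - g z * conj w := by
          rw [hww]; simp only [hE, smul_eq_mul]; ring
        have h4 : F z = 1 + ‖c‖ ^ 2 + 2 * (conj c * w) - g z * (2 * conj c + conj c ^ 2 * w) := by
          rw [hw]; simp only [hF]; ring
        rw [Pi.add_apply, h3, h4]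
        linear_combination g z * conj c * h1
      have hK1 : ‖conj c + conj w‖ = ‖1 + conj c * w‖ := by
        have h1 : w * conj w = 1 := by rw [mul_conj', hwn]; simp
        calc ‖conj c + conj w‖ = ‖w * (conj c + conj w)‖ := by rw [norm_mul, hwn, one_mul]
          _ = _ := by congr 1; linear_combination h1
      have hK2 : ‖1 + conj c * w‖ ^ 2 = 1 + ‖c‖ ^ 2 + 2 * (conj c * w).re := by
        have h5 : ‖conj c * w‖ = ‖c‖ := by rw [norm_mul, hwn, mul_one, norm_conj]
        rw [← h5, ← normSq_eq_norm_sq, ← normSq_eq_norm_sq, normSq_add]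
        simp
      have hle : (g z * ((1 + conj c * w) * (conj c + conj w))).re ≤ ‖1 + conj c * w‖ ^ 2 := by
        refine (re_le_norm _).trans ?_
        rw [norm_mul, norm_mul, hK1, ← sq]
        exact mul_le_of_le_one_left (by positivity) (hb z (by rw [hzn]; exact hρ1))
      have hre2 : (1 + (‖c‖ : ℂ) ^ 2 + 2 * (conj c * w)).re =
          1 + ‖c‖ ^ 2 + 2 * (conj c * w).re := by
        rw [← ofReal_pow, add_re, add_re, ofReal_re, one_re, two_mul, add_re, two_mul]
      rw [Function.comp_apply, reCLM_apply, hsum, sub_re, hre2]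
      linarith
    rw [hre] at hnn
    have hval : reCLM ((1 : ℂ) - ‖c‖ ^ 2 + -((ρ ^ n * ‖d‖ : ℝ) : ℂ)) =
        1 - ‖c‖ ^ 2 - ρ ^ n * ‖d‖ := by
      rw [← ofReal_pow, ← ofReal_one, ← ofReal_sub, ← ofReal_neg, ← ofReal_add, reCLM_apply,
        ofReal_re]
      ring
    rw [hval] at hnn
    linarith
  have hlim : Filter.Tendsto (fun ρ : ℝ => ρ ^ n * ‖d‖) (nhdsWithin 1 (Set.Iio 1))
      (nhds (1 ^ n * ‖d‖)) :=
    (Continuous.tendsto (by fun_prop) 1).mono_left nhdsWithin_le_nhds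
  rw [one_pow, one_mul] at hlim
  refine le_of_tendsto hlim ?_
  filter_upwards [Ioo_mem_nhdsLT (zero_lt_one' ℝ)] with ρ hρ
  exact key ρ hρ.1 hρ.2

/-- Ruscheweyh's sharp derivative estimate for bounded analytic functions. -/
theorem ruscheweyh_deriv_estimate (f : ℂ → ℂ)
    (hd : DifferentiableOn ℂ f (Metric.ball (0 : ℂ) 1))
    (hb : ∀ z : ℂ, ‖z‖ < 1 → ‖f z‖ < 1) :
    ∀ k : ℕ, 1 ≤ k → ∀ z : ℂ, ‖z‖ < 1 →
      ‖iteratedDeriv k f z‖ / (Nat.factorial k : ℝ) ≤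
        (1 - ‖f z‖ ^ 2) / ((1 - ‖z‖) ^ k * (1 + ‖z‖)) := by
  intro k hk a ha
  obtain ⟨k, rfl⟩ : ∃ l, k = l + 1 := ⟨k - 1, by omega⟩
  set g : ℂ → ℂ := fun w => f ((a + w) / (1 + conj a * w)) with hg
  have hg0 : g 0 = f a := by simp [hg]
  have hgd : DifferentiableOn ℂ g (ball 0 1) := by
    intro w hw
    have hw1 : ‖w‖ < 1 := by simpa using hw
    have h1 := norm_add_div_one_add_conj_mul_lt_one ha hw1
    exact ((hd.differentiableAt (isOpen_ball.mem_nhds (by simpa only [mem_ball_zero_iff]))).comp w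
      (hasDerivAt_add_div_one_add_conj_mul ha hw1).differentiableAt).differentiableWithinAt
  have hgb (w : ℂ) (hw : ‖w‖ < 1) : ‖g w‖ ≤ 1 :=
    (hb _ (norm_add_div_one_add_conj_mul_lt_one ha hw)).le
  have hA (n : ℕ) (hn : 1 ≤ n) :
      ‖iteratedDeriv n g 0‖ ≤ n.factorial * (1 - ‖f a‖ ^ 2) := by
    have h := norm_iteratedDeriv_div_factorial_le_one_sub_sq hgd hgb hn
    rwa [norm_div, norm_natCast, div_le_iff₀' (by positivity), hg0] at h
  have h1 := norm_iteratedDeriv_one_add_mul_pow_mul_le hgd (b := conj a) hA k (k + 1) le_rfl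
  have hbol := iteratedDeriv_succ_pow_mul_comp_disk_automorphism hd ha k 0 (by simp)
  simp only [mul_zero, add_zero, div_one, one_pow] at hbol
  rw [hbol, norm_mul, norm_pow, norm_conj] at h1
  have hn : ‖1 - a * conj a‖ = (1 - ‖a‖) * (1 + ‖a‖) := by
    rw [mul_conj', ← ofReal_pow, ← ofReal_one, ← ofReal_sub, norm_real, Real.norm_eq_abs,
      abs_of_nonneg (by nlinarith [norm_nonneg a])]
    ring
  rw [hn] at h1
  have hp : 0 < 1 - ‖a‖ := by linarith
  have hq : 0 < 1 + ‖a‖ := by positivity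
  rw [div_le_div_iff₀ (by positivity) (by positivity)]
  refine le_of_mul_le_mul_right ?_ (pow_pos hq k)
  calc _ = ‖iteratedDeriv (k + 1) f a‖ * ((1 - ‖a‖) * (1 + ‖a‖)) ^ (k + 1) := by
        rw [mul_pow]
        ring
    _ ≤ _ := h1
    _ = _ := by ring
end

section
/- Let f be analytic on the open unit disk with |f(z)| < 1 there, and let m ≥ 1 be an integer. If r ∈ [0,1) satisfies r + rᵐ < 1 and 2r² - (1 - r²ᵐ)(1 - rᵐ - r) ≤ 0, then for all z with |z| = r, |f(zᵐ)| + ∑_{k≥2} (|f⁽ᵏ⁾(zᵐ)|/k!) rᵏ ≤ 1. -/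
section

open Complex ComplexConjugate Metric Filter Topology

/-- The `n`-th Taylor coefficient of `f` at `a`. -/
noncomputable def taylorCoeff (f : ℂ → ℂ) (a : ℂ) (n : ℕ) : ℂ :=
  iteratedDeriv n f a / (n.factorial : ℂ)

lemma taylorCoeff_zero (f : ℂ → ℂ) (a : ℂ) : taylorCoeff f a 0 = f a := by
  simp [taylorCoeff]

lemma taylorCoeff_congr {f g : ℂ → ℂ} {a : ℂ} (h : f =ᶠ[𝓝 a] g) (n : ℕ) :
    taylorCoeff f a n = taylorCoeff g a n := by
  simp [taylorCoeff, h.iteratedDeriv_eq n]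

lemma AnalyticAt.analyticAt_dslope {f : ℂ → ℂ} {a : ℂ} (hf : AnalyticAt ℂ f a) :
    AnalyticAt ℂ (dslope f a) a :=
  hf.hasFPowerSeriesAt.has_fpower_series_dslope_fslope.analyticAt

lemma AnalyticAt.taylorCoeff_dslope {f : ℂ → ℂ} {a : ℂ} (hf : AnalyticAt ℂ f a) (n : ℕ) :
    taylorCoeff (dslope f a) a n = taylorCoeff f a (n + 1) := by
  have h := hf.analyticAt_dslope.hasFPowerSeriesAt.eq_formalMultilinearSeries
    hf.hasFPowerSeriesAt.has_fpower_series_dslope_fslope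
  simpa [FormalMultilinearSeries.coeff_ofScalars, taylorCoeff] using
    congrArg (fun p => FormalMultilinearSeries.coeff p n) h

lemma AnalyticAt.taylorCoeff_sub_mul {g : ℂ → ℂ} {a : ℂ} (hg : AnalyticAt ℂ g a) (n : ℕ) :
    taylorCoeff (fun z => (z - a) * g z) a (n + 1) = taylorCoeff g a n := by
  have hd : HasDerivAt (fun z => (z - a) * g z) (g a) a := by
    simpa using ((hasDerivAt_id' a).sub_const a).fun_mul hg.differentiableAt.hasDerivAt
  have h : dslope (fun z => (z - a) * g z) a = g := by
    have := dslope_sub_smul g a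
    simp only [smul_eq_mul] at this
    rw [this, hd.deriv, Function.update_eq_self]
  rw [← AnalyticAt.taylorCoeff_dslope (by fun_prop), h]

/-- Taylor expansion with analytic remainder. -/
lemma exists_taylor_remainder (k : ℕ) : ∀ F : ℂ → ℂ, DifferentiableOn ℂ F (ball 0 1) →
    ∃ K : ℂ → ℂ, DifferentiableOn ℂ K (ball 0 1) ∧ K 0 = taylorCoeff F 0 k ∧
      ∀ w, F w = ∑ j ∈ Finset.range k, taylorCoeff F 0 j * w ^ j + w ^ k * K w := by
  have hn : ball (0 : ℂ) 1 ∈ 𝓝 0 := ball_mem_nhds _ one_pos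
  induction k with
  | zero => exact fun F hF => ⟨F, hF, (taylorCoeff_zero F 0).symm, by simp⟩
  | succ k ih =>
    intro F hF
    obtain ⟨K, hK, hK0, hKe⟩ := ih (dslope F 0) ((differentiableOn_dslope hn).2 hF)
    have ha : AnalyticAt ℂ F 0 := hF.analyticAt hn
    refine ⟨K, hK, by rw [hK0, ha.taylorCoeff_dslope], fun w => ?_⟩
    have h1 : F w = F 0 + w * dslope F 0 w := by
      have := sub_smul_dslope F 0 w
      simp only [sub_zero, smul_eq_mul] at this
      rw [this]; ring
    rw [h1, hKe w, Finset.sum_range_succ', taylorCoeff_zero, mul_add, Finset.mul_sum]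
    simp only [ha.taylorCoeff_dslope]
    rw [add_comm (F 0), pow_zero, mul_one, add_right_comm]
    congr 1
    · congr 1
      exact Finset.sum_congr rfl fun j _ => by ring
    · ring

lemma norm_sub_lt_norm_one_sub {u v : ℂ} (hu : ‖u‖ < 1) (hv : ‖v‖ < 1) :
    ‖u - v‖ < ‖1 - conj v * u‖ := by
  refine lt_of_pow_lt_pow_left₀ 2 (norm_nonneg _) ?_
  have h1 : ‖u‖ ^ 2 < 1 := by nlinarith [norm_nonneg u]
  have h2 : ‖v‖ ^ 2 < 1 := by nlinarith [norm_nonneg v]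
  have key : ‖1 - conj v * u‖ ^ 2 - ‖u - v‖ ^ 2 = (1 - ‖u‖ ^ 2) * (1 - ‖v‖ ^ 2) := by
    simp only [← normSq_eq_norm_sq, normSq_apply, sub_re, sub_im, mul_re, mul_im, conj_re, conj_im,
      one_re, one_im]
    ring
  nlinarith [mul_pos (sub_pos.2 h1) (sub_pos.2 h2)]

/-- If the Taylor expansion of a self-map of the disk has no terms of degree `1, …, k`, then the
next coefficient satisfies the Schwarz-Pick bound. -/
lemma norm_le_one_sub_sq_of_gap {c : ℂ} {K : ℂ → ℂ} {k : ℕ}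
    (hK : DifferentiableOn ℂ K (ball 0 1))
    (hb : ∀ w : ℂ, ‖w‖ < 1 → ‖c + w ^ (k + 1) * K w‖ < 1) : ‖K 0‖ ≤ 1 - ‖c‖ ^ 2 := by
  have hn : ball (0 : ℂ) 1 ∈ 𝓝 0 := ball_mem_nhds _ one_pos
  set H : ℂ → ℂ := fun w => c + w ^ (k + 1) * K w with hH
  have hc : ‖c‖ < 1 := by simpa using hb 0 (by simp)
  have hlt : ∀ w : ℂ, ‖w‖ < 1 → ‖H w - c‖ < ‖1 - conj c * H w‖ := fun w hw =>
    norm_sub_lt_norm_one_sub (hb w hw) hc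
  have hne : ∀ w : ℂ, ‖w‖ < 1 → 1 - conj c * H w ≠ 0 := fun w hw =>
    norm_pos_iff.1 ((norm_nonneg _).trans_lt (hlt w hw))
  have hHd : DifferentiableOn ℂ H (ball 0 1) := by fun_prop
  set g : ℂ → ℂ := fun w => (H w - c) / (1 - conj c * H w) with hg
  have hg0 : g 0 = 0 := by simp [hg, hH]
  have hgd : DifferentiableOn ℂ g (ball 0 1) := by
    refine DifferentiableOn.div (by fun_prop) (by fun_prop) fun w hw => hne w (by simpa using hw)
  have hmaps : Set.MapsTo g (ball 0 1) (closedBall (g 0) 1) := by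
    intro w hw
    have hw' : ‖w‖ < 1 := by simpa using hw
    rw [hg0, mem_closedBall_zero_iff, hg, norm_div]
    exact div_le_one_of_le₀ (hlt w hw').le (norm_nonneg _)
  have hKc : ContinuousAt K 0 := hK.continuousOn.continuousAt hn
  have hHc : ContinuousAt H 0 := hHd.continuousOn.continuousAt hn
  have hlo : (g · - g 0) =o[𝓝 0] (fun w : ℂ => ‖w - 0‖ ^ k) := by
    have hq : ContinuousAt (fun w => w * (K w / (1 - conj c * H w))) 0 :=
      continuousAt_id.mul (hKc.div (by fun_prop) (hne 0 (by simp)))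
    have hq0 : (fun w => w * (K w / (1 - conj c * H w))) =o[𝓝 0] (fun _ => (1 : ℝ)) := by
      rw [Asymptotics.isLittleO_one_iff]
      simpa using hq.tendsto
    have := (Asymptotics.isBigO_refl (fun w : ℂ => w ^ k) (𝓝 0)).norm_right.mul_isLittleO hq0
    refine (this.congr_left fun w => ?_).congr_right fun w => by simp
    simp only [hg, hH]
    ring
  have hle : ∀ w : ℂ, ‖w‖ < 1 → w ≠ 0 → ‖K w‖ ≤ ‖1 - conj c * H w‖ := by
    intro w hw hw0
    have h1 := dist_le_mul_div_pow_of_mapsTo_ball_of_isLittleO hgd hmaps hlo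
      (z := w) (by simpa using hw)
    have hp : 0 < ‖w‖ ^ (k + 1) := by positivity
    have hD : 0 < ‖1 - conj c * H w‖ := norm_pos_iff.2 (hne w hw)
    rw [hg0, dist_zero_right, dist_zero_right, div_one, one_mul, hg, norm_div, div_le_iff₀ hD] at h1
    have h2 : H w - c = w ^ (k + 1) * K w := by simp [hH]
    rw [h2, norm_mul, norm_pow] at h1
    exact le_of_mul_le_mul_left h1 hp
  have hlim : ‖K 0‖ ≤ ‖1 - conj c * H 0‖ := by
    refine le_of_tendsto_of_tendsto (b := 𝓝[≠] (0 : ℂ)) (f := fun w => ‖K w‖)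
      (g := fun w => ‖1 - conj c * H w‖) ?_ ?_ ?_
    · exact hKc.norm.tendsto.mono_left nhdsWithin_le_nhds
    · have : ContinuousAt (fun w => ‖1 - conj c * H w‖) 0 := by fun_prop
      exact this.tendsto.mono_left nhdsWithin_le_nhds
    · filter_upwards [nhdsWithin_le_nhds hn, self_mem_nhdsWithin] with w hw hw0
      exact hle w (by simpa using hw) hw0
  have h0 : 1 - conj c * H 0 = ((1 - ‖c‖ ^ 2 : ℝ) : ℂ) := by
    simp [hH, mul_comm (conj c), mul_conj, normSq_eq_norm_sq]
  rw [h0, norm_real, Real.norm_of_nonneg (by nlinarith [norm_nonneg c])] at hlim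
  exact hlim

/-- Coefficient bound for analytic self-maps of the unit disk. -/
lemma norm_taylorCoeff_le_one_sub_sq {F : ℂ → ℂ} (hF : DifferentiableOn ℂ F (ball 0 1))
    (hb : ∀ w : ℂ, ‖w‖ < 1 → ‖F w‖ < 1) (k : ℕ) :
    ‖taylorCoeff F 0 (k + 1)‖ ≤ 1 - ‖F 0‖ ^ 2 := by
  obtain ⟨K, hK, hK0, hKe⟩ := exists_taylor_remainder (k + 1) F hF
  set ω : ℂ := exp (2 * Real.pi * I / (k + 1 : ℕ)) with hω
  have hprim : IsPrimitiveRoot ω (k + 1) := isPrimitiveRoot_exp (k + 1) k.succ_ne_zero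
  have hn1 : ‖ω‖ = 1 := hprim.norm'_eq_one k.succ_ne_zero
  have hk : ((k + 1 : ℕ) : ℂ) ≠ 0 := by exact_mod_cast k.succ_ne_zero
  have hnorm : ∀ (w : ℂ) (i : ℕ), ‖ω ^ i * w‖ = ‖w‖ := fun w i => by simp [hn1]
  set L : ℂ → ℂ := fun w => (∑ i ∈ Finset.range (k + 1), K (ω ^ i * w)) / (k + 1 : ℕ) with hL
  have hL0 : L 0 = K 0 := by
    simp only [hL, mul_zero, Finset.sum_const, Finset.card_range, nsmul_eq_mul]
    field_simp
  have hLd : DifferentiableOn ℂ L (ball 0 1) := by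
    refine DifferentiableOn.div_const (DifferentiableOn.fun_sum fun i _ => ?_) _
    refine hK.comp (by fun_prop) fun w hw => ?_
    rw [mem_ball_zero_iff] at hw ⊢
    rwa [hnorm]
  have hzero : ∀ j ∈ Finset.range k, ∑ i ∈ Finset.range (k + 1), (ω ^ i) ^ (j + 1) = 0 := by
    intro j hj
    have hj' : j < k := Finset.mem_range.1 hj
    have hne : ω ^ (j + 1) ≠ 1 := hprim.pow_ne_one_of_pos_of_lt (by omega) (by omega)
    have : ∀ i ∈ Finset.range (k + 1), (ω ^ i) ^ (j + 1) = (ω ^ (j + 1)) ^ i := fun i _ => by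
      rw [← pow_mul, ← pow_mul, mul_comm]
    rw [Finset.sum_congr rfl this, geom_sum_eq hne, ← pow_mul, mul_comm, pow_mul, hprim.pow_eq_one]
    simp
  have havg : ∀ w, F 0 + w ^ (k + 1) * L w =
      (∑ i ∈ Finset.range (k + 1), F (ω ^ i * w)) / (k + 1 : ℕ) := by
    intro w
    have h1 : ∀ i, F (ω ^ i * w) = (∑ j ∈ Finset.range k,
        taylorCoeff F 0 (j + 1) * w ^ (j + 1) * (ω ^ i) ^ (j + 1)) + F 0 +
          w ^ (k + 1) * K (ω ^ i * w) := by
      intro i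
      rw [hKe, Finset.sum_range_succ', taylorCoeff_zero, pow_zero, mul_one, mul_pow (ω ^ i) w (k + 1),
        ← pow_mul, mul_comm i, pow_mul, hprim.pow_eq_one, one_pow, one_mul]
      congr 2
      exact Finset.sum_congr rfl fun j _ => by ring
    simp only [h1, Finset.sum_add_distrib, hL, ← Finset.mul_sum]
    rw [Finset.sum_comm]
    simp only [← Finset.mul_sum]
    rw [Finset.sum_eq_zero (s := Finset.range k) fun j hj => by rw [hzero j hj, mul_zero]]
    simp only [Finset.sum_const, Finset.card_range, nsmul_eq_mul]
    field_simp
    ring_nf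
  rw [← hK0, ← hL0]
  refine norm_le_one_sub_sq_of_gap (k := k) hLd fun w hw => ?_
  have hkr : (0 : ℝ) < (k + 1 : ℕ) := by positivity
  rw [havg, norm_div, Complex.norm_natCast, div_lt_one hkr]
  calc _ ≤ ∑ i ∈ Finset.range (k + 1), ‖F (ω ^ i * w)‖ := norm_sum_le _ _
    _ < ∑ i ∈ Finset.range (k + 1), (1 : ℝ) :=
      Finset.sum_lt_sum_of_nonempty (by simp) fun i _ => hb _ (by rwa [hnorm])
    _ = _ := by simp

lemma analyticAt_mobius {a : ℂ} (hs : 1 - conj a * a ≠ 0) :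
    AnalyticAt ℂ (fun z => (z - a) / (1 - conj a * z)) a :=
  AnalyticAt.div (by fun_prop) (by fun_prop) hs

/-- Taylor coefficients of `F ∘ φ` at `a`, where `φ` is the disk automorphism sending `a` to `0`. -/
lemma norm_taylorCoeff_comp_mobius_le {a : ℂ} (ha : ‖a‖ < 1) {M : ℝ} (k : ℕ) :
    ∀ F : ℂ → ℂ, AnalyticAt ℂ F 0 → (∀ j, ‖taylorCoeff F 0 (j + 1)‖ ≤ M) →
      ‖taylorCoeff (fun z => F ((z - a) / (1 - conj a * z))) a (k + 1)‖ ≤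
        M * (1 + ‖a‖) ^ k / (1 - ‖a‖ ^ 2) ^ (k + 1) := by
  have hspos : 0 < 1 - ‖a‖ ^ 2 := by nlinarith [norm_nonneg a]
  have hs : 1 - conj a * a = ((1 - ‖a‖ ^ 2 : ℝ) : ℂ) := by
    rw [mul_comm, mul_conj, normSq_eq_norm_sq]; push_cast; ring
  have hs0 : 1 - conj a * a ≠ 0 := by rw [hs]; exact_mod_cast hspos.ne'
  have hsn : ‖1 - conj a * a‖ = 1 - ‖a‖ ^ 2 := by
    rw [hs, norm_real, Real.norm_of_nonneg hspos.le]
  have hev : ∀ᶠ z in 𝓝 a, 1 - conj a * z ≠ 0 :=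
    ContinuousAt.eventually_ne (by fun_prop) hs0
  have hφ := analyticAt_mobius hs0
  have hcomp : ∀ F : ℂ → ℂ, AnalyticAt ℂ F 0 →
      AnalyticAt ℂ (fun z => F ((z - a) / (1 - conj a * z))) a := fun F hF =>
    AnalyticAt.fun_comp (g := F) (by simpa using hF) hφ
  have hrec : ∀ (F : ℂ → ℂ), AnalyticAt ℂ F 0 → ∀ n : ℕ,
      (1 - conj a * a) * taylorCoeff (fun z => F ((z - a) / (1 - conj a * z))) a (n + 1) =
        conj a * taylorCoeff (fun z => F ((z - a) / (1 - conj a * z)) - F 0) a n +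
        taylorCoeff (fun z => dslope F 0 ((z - a) / (1 - conj a * z))) a n := by
    intro F hF n
    have h1 := hcomp F hF
    have h2 := hcomp _ hF.analyticAt_dslope
    set f : ℂ → ℂ := fun z => F ((z - a) / (1 - conj a * z)) with hf
    set f₁ : ℂ → ℂ := fun z => dslope F 0 ((z - a) / (1 - conj a * z)) with hf₁
    have h3 : AnalyticAt ℂ (fun z => conj a * (f z - F 0) + f₁ z) a := by fun_prop
    have h4 : (fun z => (z - a) * (conj a * (f z - F 0) + f₁ z)) =ᶠ[𝓝 a]
        fun z => -((1 - conj a * a) * F 0) + (1 - conj a * a) * f z := by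
      filter_upwards [hev] with z hz
      have := sub_smul_dslope F 0 ((z - a) / (1 - conj a * z))
      simp only [sub_zero, smul_eq_mul] at this
      change (z - a) / (1 - conj a * z) * f₁ z = f z - F 0 at this
      rw [div_mul_eq_mul_div, div_eq_iff hz] at this
      linear_combination this
    have h5 := h3.taylorCoeff_sub_mul n
    rw [taylorCoeff_congr h4] at h5
    simp only [taylorCoeff] at h5 ⊢
    rw [iteratedDeriv_const_add n.succ_pos, iteratedDeriv_const_mul_field,
      iteratedDeriv_fun_add (AnalyticAt.contDiffAt (by fun_prop)) h2.contDiffAt,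
      iteratedDeriv_const_mul_field] at h5
    linear_combination h5
  induction k with
  | zero =>
    intro F hF hM
    have h := hrec F hF 0
    simp only [taylorCoeff_zero, sub_self, zero_div, mul_zero, zero_add] at h
    rw [← taylorCoeff_zero (dslope F 0), hF.taylorCoeff_dslope] at h
    have h' := congrArg norm h
    rw [norm_mul, hsn] at h'
    have h0 := hM 0
    simp only [zero_add, pow_zero, mul_one, pow_one] at h0 ⊢
    rw [le_div_iff₀ hspos]
    linarith
  | succ k ih =>
    intro F hF hM
    have h := hrec F hF (k + 1)
    have e1 := ih F hF hM
    have e2 := ih (dslope F 0) hF.analyticAt_dslope fun j => by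
      rw [hF.taylorCoeff_dslope]; exact hM _
    have e3 : taylorCoeff (fun z => F ((z - a) / (1 - conj a * z)) - F 0) a (k + 1) =
        taylorCoeff (fun z => F ((z - a) / (1 - conj a * z))) a (k + 1) := by
      simp only [taylorCoeff, sub_eq_neg_add _ (F 0)]
      rw [iteratedDeriv_const_add k.succ_pos]
    rw [e3] at h
    have h' := congrArg norm h
    rw [norm_mul, hsn] at h'
    have h6 := norm_add_le
      (conj a * taylorCoeff (fun z => F ((z - a) / (1 - conj a * z))) a (k + 1))
      (taylorCoeff (fun z => dslope F 0 ((z - a) / (1 - conj a * z))) a (k + 1))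
    rw [norm_mul, RCLike.norm_conj, ← h'] at h6
    have h7 := mul_le_mul_of_nonneg_left e1 (norm_nonneg a)
    rw [pow_succ _ (k + 1), ← div_div, le_div_iff₀ hspos, pow_succ _ k]
    calc _ ≤ ‖a‖ * (M * (1 + ‖a‖) ^ k / (1 - ‖a‖ ^ 2) ^ (k + 1)) +
          M * (1 + ‖a‖) ^ k / (1 - ‖a‖ ^ 2) ^ (k + 1) := by linarith
      _ = _ := by ring

/-- Ruscheweyh's inequality. -/
lemma norm_taylorCoeff_le {f : ℂ → ℂ} (hd : DifferentiableOn ℂ f (ball 0 1))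
    (hb : ∀ z : ℂ, ‖z‖ < 1 → ‖f z‖ < 1) {a : ℂ} (ha : ‖a‖ < 1) (k : ℕ) :
    ‖taylorCoeff f a (k + 1)‖ ≤ (1 - ‖f a‖ ^ 2) * (1 + ‖a‖) ^ k / (1 - ‖a‖ ^ 2) ^ (k + 1) := by
  have hψ : ∀ w : ℂ, ‖w‖ < 1 → 1 + conj a * w ≠ 0 ∧ ‖(w + a) / (1 + conj a * w)‖ < 1 := by
    intro w hw
    have h := norm_sub_lt_norm_one_sub (v := -a) hw (by simpa using ha)
    simp only [sub_neg_eq_add, map_neg, neg_mul] at h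
    have hpos := (norm_nonneg _).trans_lt h
    exact ⟨norm_pos_iff.1 hpos, by rwa [norm_div, div_lt_one hpos]⟩
  set F : ℂ → ℂ := fun w => f ((w + a) / (1 + conj a * w)) with hF
  have hFd : DifferentiableOn ℂ F (ball 0 1) := by
    refine hd.comp (DifferentiableOn.div (by fun_prop) (by fun_prop) fun w hw =>
      (hψ w (by simpa using hw)).1) fun w hw => ?_
    simpa using (hψ w (by simpa using hw)).2
  have hF0 : F 0 = f a := by simp [hF]
  have hs0 : 1 - conj a * a ≠ 0 :=
    norm_pos_iff.1 ((norm_nonneg _).trans_lt (norm_sub_lt_norm_one_sub ha ha))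
  have hev : f =ᶠ[𝓝 a] fun z => F ((z - a) / (1 - conj a * z)) := by
    filter_upwards [ContinuousAt.eventually_ne (g := fun z => 1 - conj a * z) (by fun_prop) hs0]
      with z hz
    have e1 : (z - a) / (1 - conj a * z) + a = z * (1 - conj a * a) / (1 - conj a * z) := by
      rw [div_add' _ _ _ hz]
      ring
    have e2 : 1 + conj a * ((z - a) / (1 - conj a * z)) = (1 - conj a * a) / (1 - conj a * z) := by
      rw [mul_div_assoc', add_div' _ _ _ hz]
      ring
    simp only [hF]
    rw [e1, e2, div_div_div_cancel_right₀ hz, mul_div_cancel_right₀ _ hs0]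
  rw [taylorCoeff_congr hev, ← hF0]
  exact norm_taylorCoeff_comp_mobius_le ha k F (hFd.analyticAt (ball_mem_nhds _ one_pos))
    (norm_taylorCoeff_le_one_sub_sq hFd fun w hw => hb _ (hψ w hw).2)

end

/-- Theorem 3 (sufficiency): Bohr inequality with derivatives in place of coefficients. -/
theorem bohr_improved_two (f : ℂ → ℂ)
    (hd : DifferentiableOn ℂ f (Metric.ball (0 : ℂ) 1))
    (hb : ∀ z : ℂ, ‖z‖ < 1 → ‖f z‖ < 1)
    (m : ℕ) (hm : 1 ≤ m) (r : ℝ) (hr : r ∈ Set.Ico (0 : ℝ) 1)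
    (hsum : r + r ^ m < 1)
    (hroot : 2 * r ^ 2 - (1 - r ^ (2 * m)) * (1 - r ^ m - r) ≤ 0) :
    ∀ z : ℂ, ‖z‖ = r →
      ‖f (z ^ m)‖ +
        ∑' k : ℕ, (‖iteratedDeriv (k + 2) f (z ^ m)‖ / (Nat.factorial (k + 2) : ℝ)) * r ^ (k + 2)
        ≤ 1 := by
  intro z hz
  obtain ⟨hr0, hr1⟩ := hr
  have han : ‖z ^ m‖ = r ^ m := by rw [norm_pow, hz]
  have hR0 : 0 ≤ r ^ m := by positivity
  have hR1 : r ^ m < 1 := by linarith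
  rw [mul_comm 2 m, pow_mul] at hroot
  have hfa := hb (z ^ m) (by rwa [han])
  have hc := norm_taylorCoeff_le hd hb (a := z ^ m) (by rwa [han])
  rw [han] at hc
  generalize z ^ m = a at *
  generalize r ^ m = R at *
  have hs : 0 < 1 - R := by linarith
  have hs' : 0 < 1 + R := by linarith
  have hq : r / (1 - R) < 1 := by rw [div_lt_one hs]; linarith
  have hgeo := (hasSum_geometric_of_lt_one (div_nonneg hr0 hs.le) hq).mul_left
    ((1 - ‖f a‖ ^ 2) * r ^ 2 / ((1 - R ^ 2) * (1 - R)))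
  have hterm : ∀ k : ℕ, ‖iteratedDeriv (k + 2) f a‖ / ((k + 2).factorial : ℝ) * r ^ (k + 2) ≤
      (1 - ‖f a‖ ^ 2) * r ^ 2 / ((1 - R ^ 2) * (1 - R)) * (r / (1 - R)) ^ k := by
    intro k
    have h := mul_le_mul_of_nonneg_right (hc (k + 1)) (pow_nonneg hr0 (k + 2))
    rw [taylorCoeff, norm_div, norm_natCast] at h
    refine h.trans_eq ?_
    rw [show 1 - R ^ 2 = (1 - R) * (1 + R) by ring, mul_pow, div_pow]
    field_simp
    ring
  have hle : ∑' k : ℕ, ‖iteratedDeriv (k + 2) f a‖ / ((k + 2).factorial : ℝ) * r ^ (k + 2) ≤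
      (1 - ‖f a‖ ^ 2) * r ^ 2 / ((1 - R ^ 2) * (1 - R)) * (1 - r / (1 - R))⁻¹ := by
    rw [← hgeo.tsum_eq]
    exact (hgeo.summable.of_nonneg_of_le (fun k => by positivity) hterm).tsum_le_tsum hterm
      hgeo.summable
  have hA : 0 ≤ 1 - ‖f a‖ ^ 2 := by nlinarith [norm_nonneg (f a)]
  have hp : 0 < 1 - R - r := by linarith
  have hp2 : 0 < 1 - R ^ 2 := by nlinarith
  have hval : (1 - ‖f a‖ ^ 2) * r ^ 2 / ((1 - R ^ 2) * (1 - R)) * (1 - r / (1 - R))⁻¹ =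
      (1 - ‖f a‖ ^ 2) * (r ^ 2 / ((1 - R ^ 2) * (1 - R - r))) := by
    rw [show 1 - r / (1 - R) = (1 - R - r) / (1 - R) by field_simp]
    field_simp
  have hhalf : r ^ 2 / ((1 - R ^ 2) * (1 - R - r)) ≤ 1 / 2 := by
    rw [div_le_iff₀ (by positivity)]
    linarith
  have := mul_le_mul_of_nonneg_left hhalf hA
  nlinarith [sq_nonneg (1 - ‖f a‖)]
end

section
/- Let h(z) = ∑_{n≥0} aₙ zⁿ be analytic on the unit disk with |h| < 1, let g be analytic on the unit disk with |g'(z)| ≤ k |h'(z)| for all |z| < 1 and some k ∈ [0,1], and write g(z) = ∑_{n≥1} bₙ zⁿ. If r ∈ [0,1) satisfies r ≤ 1/3 and 2r(1+k)(1+rᵐ) - (1-r)(1-rᵐ) ≤ 0 for a given positive integer m, then for all z with |z| = r, |h(zᵐ)| + ∑_{n≥1} |aₙ| rⁿ + ∑_{n≥1} |bₙ| rⁿ ≤ 1. -/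
open Metric Filter Topology in
/-- If `‖F‖ ≤ ‖H‖` on the unit disc, then `F = ω * H` there with `ω` analytic and `‖ω‖ ≤ 1`. -/
theorem exists_bounded_analytic_factor {F H : ℂ → ℂ}
    (hF : DifferentiableOn ℂ F (ball 0 1)) (hH : DifferentiableOn ℂ H (ball 0 1))
    (hFH : ∀ z ∈ ball (0 : ℂ) 1, ‖F z‖ ≤ ‖H z‖) :
    ∃ ω : ℂ → ℂ, DifferentiableOn ℂ ω (ball 0 1) ∧ (∀ z ∈ ball (0 : ℂ) 1, ‖ω z‖ ≤ 1) ∧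
      ∀ z ∈ ball (0 : ℂ) 1, F z = ω z * H z := by
  set q : ℂ → ℂ := fun z ↦ F z / H z with hq
  have hq_le : ∀ z ∈ ball (0 : ℂ) 1, ‖q z‖ ≤ 1 := fun z hz ↦ by
    rw [hq, norm_div]
    exact div_le_one_of_le₀ (hFH z hz) (norm_nonneg _)
  have hq_diff : ∀ c ∈ ball (0 : ℂ) 1, ∀ᶠ z in 𝓝[≠] c, DifferentiableAt ℂ q z := by
    intro c hc
    have hball : ∀ᶠ z in 𝓝[≠] c, z ∈ ball (0 : ℂ) 1 :=
      nhdsWithin_le_nhds (isOpen_ball.mem_nhds hc)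
    rcases (hH.analyticAt (isOpen_ball.mem_nhds hc)).eventually_eq_zero_or_eventually_ne_zero
      with h0 | h0
    · filter_upwards [nhdsWithin_le_nhds h0.eventually_nhds] with z hz
      have : q =ᶠ[𝓝 z] fun _ ↦ 0 := by
        filter_upwards [hz] with w hw
        simp [hq, hw]
      exact this.differentiableAt_iff.2 (differentiableAt_const _)
    · filter_upwards [h0, hball] with z hz hzb
      exact (hF.differentiableAt (isOpen_ball.mem_nhds hzb)).div
        (hH.differentiableAt (isOpen_ball.mem_nhds hzb)) hz
  have hlim : ∀ c ∈ ball (0 : ℂ) 1, Tendsto q (𝓝[≠] c) (𝓝 (limUnder (𝓝[≠] c) q)) := by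
    intro c hc
    refine Complex.tendsto_limUnder_of_differentiable_on_punctured_nhds_of_bounded_under
      (hq_diff c hc) ⟨1 + ‖q c‖, ?_⟩
    rw [eventually_map]
    filter_upwards [nhdsWithin_le_nhds (isOpen_ball.mem_nhds hc)] with z hz
    exact norm_sub_le_of_le (hq_le z hz) le_rfl
  refine ⟨fun c ↦ limUnder (𝓝[≠] c) q, fun c hc ↦ ?_, fun c hc ↦ ?_, fun c hc ↦ ?_⟩
  · have hpunct : ∀ᶠ z in 𝓝[≠] c, limUnder (𝓝[≠] z) q = q z := by
      filter_upwards [hq_diff c hc] with z hz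
      exact (hz.continuousAt.tendsto.mono_left nhdsWithin_le_nhds).limUnder_eq
    refine (Complex.analyticAt_of_differentiable_on_punctured_nhds_of_continuousAt ?_
      ?_).differentiableAt.differentiableWithinAt
    · have h1 := eventually_eventually_nhdsWithin.2 hpunct
      filter_upwards [hq_diff c hc, h1, self_mem_nhdsWithin] with z hz hz1 hzc
      rw [(isOpen_compl_singleton.nhdsWithin_eq hzc)] at hz1
      exact (EventuallyEq.differentiableAt_iff hz1).2 hz
    · rw [← continuousWithinAt_compl_self]
      exact (hlim c hc).congr' (hpunct.mono fun z hz ↦ hz.symm)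
  · refine le_of_tendsto (hlim c hc).norm ?_
    filter_upwards [nhdsWithin_le_nhds (isOpen_ball.mem_nhds hc)] with z hz using hq_le z hz
  · have hFc : Tendsto F (𝓝[≠] c) (𝓝 (F c)) :=
      (hF.differentiableAt (isOpen_ball.mem_nhds hc)).continuousAt.tendsto.mono_left
        nhdsWithin_le_nhds
    have hHc : Tendsto H (𝓝[≠] c) (𝓝 (H c)) :=
      (hH.differentiableAt (isOpen_ball.mem_nhds hc)).continuousAt.tendsto.mono_left
        nhdsWithin_le_nhds
    refine tendsto_nhds_unique hFc (((hlim c hc).mul hHc).congr' ?_)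
    filter_upwards [nhdsWithin_le_nhds (isOpen_ball.mem_nhds hc)] with z hz
    refine div_mul_cancel_of_imp fun h0 ↦ ?_
    simpa [h0] using hFH z hz

open Metric in
/-- The Taylor coefficients at `0` as circle averages. -/
theorem circleAverage_inv_pow_mul {f : ℂ → ℂ} {ρ : ℝ} (hρ : 0 < ρ)
    (hf : DifferentiableOn ℂ f (closedBall 0 ρ)) (n : ℕ) :
    Real.circleAverage (fun z ↦ (z ^ n)⁻¹ * f z) 0 ρ =
      iteratedDeriv n f 0 / (n.factorial : ℂ) := by
  have h := Complex.circleIntegral_one_div_sub_center_pow_smul_of_differentiable_on_off_countable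
    hρ n Set.countable_empty hf.continuousOn
    (fun z hz ↦ hf.differentiableAt (closedBall_mem_nhds_of_mem hz.1))
  have hI := Complex.two_pi_I_ne_zero
  rw [Real.circleAverage_eq_circleIntegral hρ.ne']
  have : ∀ z : ℂ, (z - 0)⁻¹ • ((z ^ n)⁻¹ * f z) = (1 / (z - 0) ^ (n + 1)) • f z := by
    intro z
    rw [sub_zero, smul_eq_mul, smul_eq_mul, one_div, pow_succ, mul_inv]
    ring
  rw [funext this, h, smul_smul, smul_eq_mul]
  field_simp

open Metric Filter Topology ComplexConjugate in
/-- The Taylor coefficients of a self-map of the unit disc satisfy `‖aₙ‖ ≤ 1 - ‖a₀‖ ^ 2`. -/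
theorem norm_taylor_coeff_le_one_sub_sq {f : ℂ → ℂ} (hf : DifferentiableOn ℂ f (ball 0 1))
    (hb : ∀ z ∈ ball (0 : ℂ) 1, ‖f z‖ ≤ 1) {n : ℕ} (hn : n ≠ 0) :
    ‖iteratedDeriv n f 0 / (n.factorial : ℂ)‖ ≤ 1 - ‖f 0‖ ^ 2 := by
  obtain ⟨α, hα, hα0⟩ := RCLike.exists_norm_eq_mul_self (f 0)
  set c := iteratedDeriv n f 0 / (n.factorial : ℂ) with hc
  obtain ⟨β, hβ, hβ0⟩ := RCLike.exists_norm_eq_mul_self (α * c)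
  set a := ‖f 0‖ with ha
  have hcn : ‖α * c‖ = ‖c‖ := by rw [norm_mul, hα, one_mul]
  have key : ∀ ρ ∈ Set.Ioo (0 : ℝ) 1, ‖c‖ * ρ ^ n ≤ 1 - a ^ 2 := by
    rintro ρ ⟨hρ0, hρ1⟩
    have hρC : (ρ : ℂ) ≠ 0 := by exact_mod_cast hρ0.ne'
    have hf' : DifferentiableOn ℂ f (closedBall 0 ρ) := hf.mono (closedBall_subset_ball hρ1)
    set u : ℂ → ℂ := fun z ↦ (z ^ n)⁻¹ * (α * β * ρ ^ n * f z) with hu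
    set G : ℂ → ℂ := fun z ↦ α * f z * (2 * a + a ^ 2 * (conj β * z ^ n / ρ ^ n)) -
      (1 + a ^ 2 + 2 * a * (conj β * z ^ n / ρ ^ n)) with hG
    have hGd : DifferentiableOn ℂ G (closedBall 0 ρ) := by fun_prop
    have hGavg : Real.circleAverage G 0 ρ = G 0 := by
      refine DiffContOnCl.circleAverage (DifferentiableOn.diffContOnCl ?_)
      rw [abs_of_pos hρ0]
      exact hGd.mono closure_ball_subset_closedBall
    have huavg : Real.circleAverage u 0 ρ = ‖c‖ * ρ ^ n := by
      have hu' : u = (α * β * ρ ^ n) • fun z ↦ (z ^ n)⁻¹ * f z := by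
        funext z
        simp only [hu, Pi.smul_apply, smul_eq_mul]
        ring
      rw [hu', Real.circleAverage_smul, circleAverage_inv_pow_mul hρ0 hf', ← hc, ← hcn, smul_eq_mul]
      refine Eq.trans ?_ (congrArg (· * (ρ : ℂ) ^ n) hβ0.symm)
      ring
    have hz0 : ∀ z ∈ sphere (0 : ℂ) ρ, z ≠ 0 := fun z hz ↦ ne_of_mem_sphere hz hρ0.ne'
    have hcont : ContinuousOn u (sphere 0 ρ) := by
      have := hf'.continuousOn.mono sphere_subset_closedBall
      refine ContinuousOn.mul (ContinuousOn.inv₀ (by fun_prop) fun z hz ↦ ?_) (by fun_prop)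
      exact pow_ne_zero _ (hz0 z hz)
    have hui : CircleIntegrable u 0 ρ := hcont.circleIntegrable hρ0.le
    have hGi : CircleIntegrable G 0 ρ :=
      (hGd.continuousOn.mono sphere_subset_closedBall).circleIntegrable hρ0.le
    have havg : Real.circleAverage (u + G) 0 ρ = ((‖c‖ * ρ ^ n - (1 - a ^ 2) : ℝ) : ℂ) := by
      rw [Real.circleAverage_add hui hGi, huavg, hGavg]
      have : α * f 0 = a := hα0.symm
      simp only [hG, this, zero_pow hn]
      push_cast
      ring
    have hre : ∀ z ∈ sphere (0 : ℂ) |ρ|, (u z + G z).re ≤ 0 := by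
      intro z hz
      rw [abs_of_pos hρ0] at hz
      have hzρ : ‖z‖ = ρ := by simpa using hz
      set ζ : ℂ := conj β * z ^ n / ρ ^ n with hζ
      have hζ1 : ‖ζ‖ = 1 := by
        rw [hζ, norm_div, norm_mul, norm_pow, norm_pow, hzρ, RCLike.norm_conj, hβ]
        simp [abs_of_pos hρ0, hρ0.ne']
      have hββ : conj β * β = 1 := by
        rw [mul_comm, Complex.mul_conj, Complex.normSq_eq_norm_sq, hβ]
        simp
      have hζc : conj ζ = β * ρ ^ n * (z ^ n)⁻¹ := by
        have h1 : ζ * conj ζ = 1 := by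
          rw [Complex.mul_conj, Complex.normSq_eq_norm_sq, hζ1]
          simp
        have hzn : z ^ n ≠ 0 := pow_ne_zero _ (hz0 z hz)
        have h2 : ζ * (β * ρ ^ n * (z ^ n)⁻¹) = 1 := by
          rw [hζ]
          field_simp
          exact hββ
        exact mul_left_cancel₀ (left_ne_zero_of_mul_eq_one h1) (h1.trans h2.symm)
      have hsum : u z + G z = α * f z * ((1 + a * ζ) * (a + conj ζ)) - (1 + a ^ 2 + 2 * a * ζ) := by
        have h1 : ζ * conj ζ = 1 := by
          rw [Complex.mul_conj, Complex.normSq_eq_norm_sq, hζ1]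
          simp
        have : (1 + a * ζ) * (a + conj ζ) = 2 * a + conj ζ + a ^ 2 * ζ := by
          linear_combination (a : ℂ) * h1
        rw [this, hζc]
        simp only [hu, hG, ← hζ]
        ring
      have hsq : ζ.re ^ 2 + ζ.im ^ 2 = 1 := by
        have := Complex.sq_norm ζ
        rw [hζ1, Complex.normSq_apply] at this
        linarith
      have hnorm : ‖(1 + a * ζ) * (a + conj ζ)‖ = 1 + a ^ 2 + 2 * a * ζ.re := by
        have h1 : ‖1 + a * ζ‖ ^ 2 = 1 + a ^ 2 + 2 * a * ζ.re := by
          rw [Complex.sq_norm, Complex.normSq_apply]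
          simp
          linear_combination a ^ 2 * hsq
        have h2 : ‖a + conj ζ‖ ^ 2 = 1 + a ^ 2 + 2 * a * ζ.re := by
          rw [Complex.sq_norm, Complex.normSq_apply]
          simp
          linear_combination hsq
        have h3 : ‖1 + a * ζ‖ = ‖a + conj ζ‖ :=
          (sq_eq_sq₀ (norm_nonneg _) (norm_nonneg _)).1 (h1.trans h2.symm)
        rw [norm_mul, ← h3, ← sq, h1]
      have hle : (α * f z * ((1 + a * ζ) * (a + conj ζ))).re ≤ 1 + a ^ 2 + 2 * a * ζ.re := by
        refine (Complex.re_le_norm _).trans ?_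
        rw [norm_mul, hnorm, norm_mul, hα, one_mul]
        have : 0 ≤ 1 + a ^ 2 + 2 * a * ζ.re := hnorm ▸ norm_nonneg _
        refine mul_le_of_le_one_left this (hb z ?_)
        rw [mem_ball_zero_iff, hzρ]
        exact hρ1
      have hre2 : (1 + a ^ 2 + 2 * a * ζ : ℂ).re = 1 + a ^ 2 + 2 * a * ζ.re := by
        simp [← Complex.ofReal_pow]
      rw [hsum, Complex.sub_re, hre2]
      linarith
    have hcomm := Complex.reCLM.circleAverage_comp_comm (hui.add hGi)
    rw [havg] at hcomm
    have hle : Real.circleAverage (Complex.reCLM ∘ (u + G)) 0 ρ ≤ 0 := by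
      refine Real.circleAverage_mono_on_of_le_circle ?_ fun z hz ↦ hre z hz
      refine ContinuousOn.circleIntegrable hρ0.le ?_
      exact Complex.reCLM.continuous.comp_continuousOn
        (hcont.add (hGd.continuousOn.mono sphere_subset_closedBall))
    rw [hcomm, Complex.reCLM_apply, Complex.ofReal_re] at hle
    linarith
  have hlim : Tendsto (fun ρ : ℝ ↦ ‖c‖ * ρ ^ n) (𝓝[<] 1) (𝓝 (‖c‖ * 1 ^ n)) :=
    ((continuous_const.mul (continuous_pow n)).tendsto 1).mono_left nhdsWithin_le_nhds
  rw [one_pow, mul_one] at hlim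
  refine le_of_tendsto hlim ?_
  filter_upwards [Ioo_mem_nhdsLT zero_lt_one] with ρ hρ using key ρ hρ

open Metric ComplexConjugate in
/-- **Schwarz-Pick** growth estimate for a self-map of the unit disc. -/
theorem norm_le_schwarz_pick {h : ℂ → ℂ} (hd : DifferentiableOn ℂ h (ball 0 1))
    (hb : ∀ z ∈ ball (0 : ℂ) 1, ‖h z‖ < 1) {w : ℂ} (hw : ‖w‖ < 1) :
    ‖h w‖ ≤ (‖h 0‖ + ‖w‖) / (1 + ‖h 0‖ * ‖w‖) := by
  have ha : ‖h 0‖ < 1 := hb 0 (by simp)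
  have hlt : ∀ z ∈ ball (0 : ℂ) 1, ‖conj (h 0) * h z‖ < 1 := fun z hz ↦ by
    rw [norm_mul, RCLike.norm_conj]
    exact mul_lt_one_of_nonneg_of_lt_one_left (norm_nonneg _) ha (hb z hz).le
  have hne : ∀ z ∈ ball (0 : ℂ) 1, 1 - conj (h 0) * h z ≠ 0 := fun z hz h0 ↦ by
    have := hlt z hz
    rw [← sub_eq_zero.1 h0] at this
    simp at this
  have hid : ∀ x y : ℂ, ‖1 - conj x * y‖ ^ 2 - ‖y - x‖ ^ 2 = (1 - ‖x‖ ^ 2) * (1 - ‖y‖ ^ 2) := by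
    intro x y
    simp only [Complex.sq_norm, Complex.normSq_apply]
    simp
    ring
  set φ : ℂ → ℂ := fun z ↦ (h z - h 0) / (1 - conj (h 0) * h z) with hφ
  have hφd : DifferentiableOn ℂ φ (ball 0 1) := by
    refine (hd.sub_const _).div ((hd.const_mul _).const_sub _) hne
  have hmaps : Set.MapsTo φ (ball 0 1) (closedBall 0 1) := fun z hz ↦ by
    rw [mem_closedBall_zero_iff, hφ, norm_div]
    refine div_le_one_of_le₀ ?_ (norm_nonneg _)
    refine (sq_le_sq₀ (norm_nonneg _) (norm_nonneg _)).1 ?_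
    have := hid (h 0) (h z)
    have h1 : 0 ≤ (1 - ‖h 0‖ ^ 2) * (1 - ‖h z‖ ^ 2) := by
      have := hb z hz
      apply mul_nonneg <;> nlinarith [norm_nonneg (h 0), norm_nonneg (h z)]
    linarith
  have hφw : ‖φ w‖ ≤ ‖w‖ :=
    Complex.norm_le_norm_of_mapsTo_ball hφd hmaps (by simp [hφ]) hw
  have hwb : w ∈ ball (0 : ℂ) 1 := by simpa using hw
  have hdiff : ‖h w - h 0‖ ≤ ‖w‖ * ‖1 - conj (h 0) * h w‖ := by
    rwa [hφ, norm_div, div_le_iff₀ (norm_pos_iff.2 (hne w hwb))] at hφw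
  have hH := hb w hwb
  have hlow : 1 - ‖h 0‖ * ‖h w‖ ≤ ‖1 - conj (h 0) * h w‖ := by
    have := norm_sub_norm_le (1 : ℂ) (conj (h 0) * h w)
    simpa [norm_mul] using this
  have hI := hid (h 0) (h w)
  set a := ‖h 0‖
  set H := ‖h w‖
  set t := ‖w‖
  have ha0 : 0 ≤ a := norm_nonneg _
  have hH0 : 0 ≤ H := norm_nonneg _
  have ht0 : 0 ≤ t := norm_nonneg _
  have haH : 0 < 1 - a * H := by nlinarith
  have h1 : ‖h w - h 0‖ ^ 2 ≤ (t * ‖1 - conj (h 0) * h w‖) ^ 2 := by gcongr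
  have h2 : (1 - t ^ 2) * (1 - a * H) ^ 2 ≤ (1 - t ^ 2) * ‖1 - conj (h 0) * h w‖ ^ 2 := by
    have : 0 ≤ 1 - t ^ 2 := by nlinarith
    gcongr
  have h3 : (H - a) ^ 2 ≤ (t * (1 - a * H)) ^ 2 := by nlinarith
  have h4 : H - a ≤ t * (1 - a * H) := le_of_sq_le_sq h3 (by positivity)
  rw [le_div_iff₀ (by positivity)]
  linarith

open Metric in
/-- **Bohr's inequality**. -/
theorem tsum_norm_taylor_coeff_mul_pow_le_one {f : ℂ → ℂ} (hf : DifferentiableOn ℂ f (ball 0 1))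
    (hb : ∀ z ∈ ball (0 : ℂ) 1, ‖f z‖ ≤ 1) {r : ℝ} (hr0 : 0 ≤ r) (hr : r ≤ 1 / 3) :
    Summable (fun n : ℕ ↦ ‖iteratedDeriv n f 0 / (n.factorial : ℂ)‖ * r ^ n) ∧
      ∑' n : ℕ, ‖iteratedDeriv n f 0 / (n.factorial : ℂ)‖ * r ^ n ≤ 1 := by
  have hr1 : r < 1 := by linarith
  have hg := summable_geometric_of_lt_one hr0 hr1
  have hsucc : ∀ n : ℕ, ‖iteratedDeriv (n + 1) f 0 / ((n + 1).factorial : ℂ)‖ * r ^ (n + 1) ≤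
      (1 - ‖f 0‖ ^ 2) * r * r ^ n := fun n ↦ by
    rw [mul_assoc, ← pow_succ']
    gcongr
    exact norm_taylor_coeff_le_one_sub_sq hf hb n.succ_ne_zero
  have hs1 : Summable fun n : ℕ ↦
      ‖iteratedDeriv (n + 1) f 0 / ((n + 1).factorial : ℂ)‖ * r ^ (n + 1) :=
    Summable.of_nonneg_of_le (fun n ↦ by positivity) hsucc (hg.mul_left _)
  have hs := (summable_nat_add_iff
    (f := fun n : ℕ ↦ ‖iteratedDeriv n f 0 / (n.factorial : ℂ)‖ * r ^ n) 1).1 hs1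
  refine ⟨hs, ?_⟩
  rw [hs.tsum_eq_zero_add]
  have h1 := hs1.tsum_le_tsum hsucc (hg.mul_left _)
  rw [tsum_mul_left, tsum_geometric_of_lt_one hr0 hr1] at h1
  have h0 : ‖f 0‖ ≤ 1 := hb 0 (by simp)
  have h2 : r * (1 - r)⁻¹ ≤ 1 / 2 := by
    rw [← div_eq_mul_inv, div_le_iff₀ (by linarith)]
    linarith
  have h3 : 0 ≤ 1 - ‖f 0‖ ^ 2 := by nlinarith [norm_nonneg (f 0)]
  simp only [iteratedDeriv_zero, Nat.factorial_zero, Nat.cast_one, div_one, pow_zero, mul_one]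
  have h4 : (1 - ‖f 0‖ ^ 2) * (r * (1 - r)⁻¹) ≤ (1 - ‖f 0‖ ^ 2) * (1 / 2) := by gcongr
  nlinarith [sq_nonneg (1 - ‖f 0‖)]

open Metric Finset in
/-- If `‖g'‖ ≤ k * ‖h'‖` on the unit disc, then the majorant series of `g - g 0` is at most `k` times
that of `h - h 0` for `r ≤ 1 / 3`. -/
theorem tsum_norm_taylor_coeff_le_of_norm_deriv_le {h g : ℂ → ℂ} {k r : ℝ}
    (hd : DifferentiableOn ℂ h (ball 0 1)) (gd : DifferentiableOn ℂ g (ball 0 1)) (hk : 0 ≤ k)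
    (hgh : ∀ z ∈ ball (0 : ℂ) 1, ‖deriv g z‖ ≤ k * ‖deriv h z‖) (hr0 : 0 ≤ r) (hr : r ≤ 1 / 3)
    (hs : Summable fun n : ℕ ↦
      ‖iteratedDeriv (n + 1) h 0 / ((n + 1).factorial : ℂ)‖ * r ^ (n + 1)) :
    ∑' n : ℕ, ‖iteratedDeriv (n + 1) g 0 / ((n + 1).factorial : ℂ)‖ * r ^ (n + 1) ≤
      k * ∑' n : ℕ, ‖iteratedDeriv (n + 1) h 0 / ((n + 1).factorial : ℂ)‖ * r ^ (n + 1) := by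
  have hd' := hd.deriv isOpen_ball
  obtain ⟨ω, hω, hω1, hωeq⟩ := exists_bounded_analytic_factor (gd.deriv isOpen_ball)
    (hd'.const_mul (k : ℂ)) (fun z hz ↦ by
      rw [norm_mul, Complex.norm_real, Real.norm_of_nonneg hk]
      exact hgh z hz)
  obtain ⟨hsω, hsω1⟩ := tsum_norm_taylor_coeff_mul_pow_le_one hω hω1 hr0 hr
  set W : ℕ → ℝ := fun n ↦ ‖iteratedDeriv n ω 0 / (n.factorial : ℂ)‖ * r ^ n with hW
  set A : ℕ → ℝ := fun n ↦
    ‖iteratedDeriv (n + 1) h 0 / ((n + 1).factorial : ℂ)‖ * r ^ (n + 1) with hA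
  have hW0 : ∀ n, 0 ≤ W n := fun n ↦ by positivity
  have hA0 : ∀ n, 0 ≤ A n := fun n ↦ by positivity
  have h0 : (0 : ℂ) ∈ ball (0 : ℂ) 1 := by simp
  have hnhds : ball (0 : ℂ) 1 ∈ nhds 0 := isOpen_ball.mem_nhds h0
  have hcoeff : ∀ n : ℕ, ‖iteratedDeriv (n + 1) g 0 / ((n + 1).factorial : ℂ)‖ * r ^ (n + 1) ≤
      k * ∑ p ∈ antidiagonal n, W p.1 * A p.2 := by
    intro n
    have hev : deriv g =ᶠ[nhds 0] fun z ↦ (k : ℂ) * (ω * deriv h) z := by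
      filter_upwards [hnhds] with z hz
      rw [hωeq z hz, Pi.mul_apply]
      ring
    have hexp : iteratedDeriv (n + 1) g 0 = k * ∑ i ∈ range (n + 1),
        (n.choose i : ℂ) * iteratedDeriv i ω 0 * iteratedDeriv (n - i + 1) h 0 := by
      rw [iteratedDeriv_succ', hev.iteratedDeriv_eq, iteratedDeriv_const_mul_field,
        iteratedDeriv_mul (hω.analyticAt hnhds).contDiffAt (hd'.analyticAt hnhds).contDiffAt]
      simp only [iteratedDeriv_succ']
    rw [hexp, ← Nat.sum_antidiagonal_eq_sum_range_succ_mk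
      (f := fun p : ℕ × ℕ ↦ (n.choose p.1 : ℂ) * iteratedDeriv p.1 ω 0 *
        iteratedDeriv (p.2 + 1) h 0), norm_div, norm_mul, Complex.norm_real,
      Real.norm_of_nonneg hk, mul_div_assoc, mul_assoc]
    gcongr
    rw [← norm_div, sum_div, mul_comm]
    refine (mul_le_mul_of_nonneg_left (norm_sum_le _ _) (by positivity)).trans ?_
    rw [mul_sum]
    refine sum_le_sum fun p hp ↦ ?_
    rw [HasAntidiagonal.mem_antidiagonal] at hp
    obtain ⟨i, j⟩ := p
    simp only at hp ⊢
    subst hp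
    have hch : ((i + j).choose i : ℝ) * i.factorial * j.factorial = (i + j).factorial := by
      have := Nat.add_choose_mul_factorial_mul_factorial i j
      rw [← Nat.choose_symm_add] at this
      exact_mod_cast this
    simp only [hW, hA, norm_div, norm_mul, Complex.norm_natCast]
    have hfac : ((i + j).choose i : ℝ) / ((i + j + 1).factorial : ℝ) ≤
        1 / (i.factorial * (j + 1).factorial) := by
      rw [div_le_div_iff₀ (by positivity) (by positivity)]
      simp only [Nat.factorial_succ]
      push_cast
      rw [← hch]
      have : (0 : ℝ) ≤ ((i + j).choose i : ℝ) * i.factorial * j.factorial := by positivity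
      nlinarith [mul_nonneg this (Nat.cast_nonneg (α := ℝ) i)]
    calc r ^ (i + j + 1) * (((i + j).choose i : ℝ) * ‖iteratedDeriv i ω 0‖ *
          ‖iteratedDeriv (j + 1) h 0‖ / ((i + j + 1).factorial : ℝ))
        = r ^ (i + j + 1) * ‖iteratedDeriv i ω 0‖ * ‖iteratedDeriv (j + 1) h 0‖ *
          (((i + j).choose i : ℝ) / ((i + j + 1).factorial : ℝ)) := by ring
      _ ≤ r ^ (i + j + 1) * ‖iteratedDeriv i ω 0‖ * ‖iteratedDeriv (j + 1) h 0‖ *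
          (1 / (i.factorial * (j + 1).factorial)) := by gcongr
      _ = _ := by
        field_simp
        ring
  have hprod := summable_norm_sum_mul_antidiagonal_of_summable_norm hsω.norm hs.norm
  have hcauchy := tsum_mul_tsum_eq_tsum_sum_antidiagonal_of_summable_norm hsω.norm hs.norm
  have hsum : Summable fun n ↦ k * ∑ p ∈ antidiagonal n, W p.1 * A p.2 :=
    hprod.of_norm.mul_left k
  have hsg := Summable.of_nonneg_of_le (fun n ↦ by positivity) hcoeff hsum
  refine (hsg.tsum_le_tsum hcoeff hsum).trans ?_
  rw [tsum_mul_left, ← hcauchy]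
  gcongr
  exact mul_le_of_le_one_left (tsum_nonneg hA0) hsω1


/-- Theorem 5 (sufficiency): Bohr inequality for harmonic mappings `f = h + conj g`. -/
theorem bohr_harmonic (h g : ℂ → ℂ)
    (hd : DifferentiableOn ℂ h (Metric.ball (0 : ℂ) 1))
    (gd : DifferentiableOn ℂ g (Metric.ball (0 : ℂ) 1))
    (hb : ∀ z : ℂ, ‖z‖ < 1 → ‖h z‖ < 1)
    (k : ℝ) (hk : k ∈ Set.Icc (0 : ℝ) 1)
    (hgh : ∀ z : ℂ, ‖z‖ < 1 → ‖deriv g z‖ ≤ k * ‖deriv h z‖)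
    (m : ℕ) (hm : 1 ≤ m) (r : ℝ) (hr : r ∈ Set.Ico (0 : ℝ) 1)
    (hr3 : r ≤ 1 / 3)
    (hroot : 2 * r * (1 + k) * (1 + r ^ m) - (1 - r) * (1 - r ^ m) ≤ 0) :
    ∀ z : ℂ, ‖z‖ = r →
      ‖h (z ^ m)‖ +
        (∑' n : ℕ, ‖iteratedDeriv (n + 1) h 0 / (Nat.factorial (n + 1) : ℂ)‖ * r ^ (n + 1)) +
        (∑' n : ℕ, ‖iteratedDeriv (n + 1) g 0 / (Nat.factorial (n + 1) : ℂ)‖ * r ^ (n + 1))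
        ≤ 1 := by
  intro z hz
  obtain ⟨hr0, hr1⟩ := hr
  have hball : ∀ z ∈ Metric.ball (0 : ℂ) 1, ‖z‖ < 1 := fun z hz ↦ by simpa using hz
  have hle : ∀ n : ℕ, ‖iteratedDeriv (n + 1) h 0 / (Nat.factorial (n + 1) : ℂ)‖ * r ^ (n + 1) ≤
      (1 - ‖h 0‖ ^ 2) * r * r ^ n := fun n ↦ by
    rw [mul_assoc, ← pow_succ']
    gcongr
    exact norm_taylor_coeff_le_one_sub_sq hd (fun z hz ↦ (hb z (hball z hz)).le) n.succ_ne_zero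
  have hgeo := (summable_geometric_of_lt_one hr0 hr1).mul_left ((1 - ‖h 0‖ ^ 2) * r)
  have hs := Summable.of_nonneg_of_le (fun n ↦ by positivity) hle hgeo
  have hA := hs.tsum_le_tsum hle hgeo
  rw [tsum_mul_left, tsum_geometric_of_lt_one hr0 hr1] at hA
  have hB := tsum_norm_taylor_coeff_le_of_norm_deriv_le hd gd hk.1
    (fun z hz ↦ hgh z (hball z hz)) hr0 hr3 hs
  have hzm : ‖z ^ m‖ = r ^ m := by rw [norm_pow, hz]
  have hrm : r ^ m < 1 := pow_lt_one₀ hr0 hr1 (by omega)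
  have hP := norm_le_schwarz_pick hd (fun z hz ↦ hb z (hball z hz)) (w := z ^ m) (by rwa [hzm])
  rw [hzm] at hP
  have ha := hb 0 (by simp)
  set SA := ∑' n : ℕ, ‖iteratedDeriv (n + 1) h 0 / (Nat.factorial (n + 1) : ℂ)‖ * r ^ (n + 1)
  set a := ‖h 0‖
  set t := r ^ m
  have ha0 : 0 ≤ a := norm_nonneg _
  have ht0 : 0 ≤ t := pow_nonneg hr0 m
  have hk0 := hk.1
  set R := r * (1 - r)⁻¹ * (1 + k) with hR
  have hR0 : 0 ≤ R := by
    have : 0 < 1 - r := by linarith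
    positivity
  have hRt : 2 * (1 + t) * R ≤ 1 - t := by
    have h1 : 0 < 1 - r := by linarith
    rw [hR, ← div_eq_mul_inv, div_mul_eq_mul_div, mul_div_assoc', div_le_iff₀ h1]
    linarith
  have hSA : (1 + k) * SA ≤ (1 - a ^ 2) * R := by
    have := mul_le_mul_of_nonneg_left hA (by linarith : 0 ≤ 1 + k)
    rw [hR]
    linarith
  have hfin : (a + t) / (1 + a * t) + (1 - a ^ 2) * R ≤ 1 := by
    have hpos : 0 < 1 + a * t := by positivity
    have h1 : (1 + a) * (1 + a * t) * R ≤ 1 - t := by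
      refine le_trans ?_ hRt
      gcongr
      · linarith
      · exact mul_le_of_le_one_left ht0 ha.le
    have h2 : (1 - a) * ((1 + a) * (1 + a * t) * R) ≤ (1 - a) * (1 - t) :=
      mul_le_mul_of_nonneg_left h1 (by linarith)
    rw [← le_sub_iff_add_le, div_le_iff₀ hpos]
    linarith
  linarith
end

section
/- Let h(z) = ∑ aₙ zⁿ be analytic on the unit disk with |h| < 1, a = |a₀|. Then for r ∈ [0, 1/3], ∑_{n≥1} |aₙ| rⁿ ≤ (1 - a²) r / (1 - a r). -/
open Metric

/-- The `n`-th Taylor coefficient at `0`. -/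
noncomputable def taylorCoeffZero (f : ℂ → ℂ) (n : ℕ) : ℂ :=
  iteratedDeriv n f 0 / (Nat.factorial n : ℂ)

lemma contDiffAt_zero_of_differentiableOn_ball {f : ℂ → ℂ}
    (hf : DifferentiableOn ℂ f (ball 0 1)) (n : ℕ) : ContDiffAt ℂ n f 0 :=
  (hf.analyticAt (ball_mem_nhds 0 one_pos)).contDiffAt

lemma taylorCoeffZero_zero (f : ℂ → ℂ) : taylorCoeffZero f 0 = f 0 := by
  simp [taylorCoeffZero]

lemma taylorCoeffZero_mul {f g : ℂ → ℂ} (hf : DifferentiableOn ℂ f (ball 0 1))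
    (hg : DifferentiableOn ℂ g (ball 0 1)) (n : ℕ) :
    taylorCoeffZero (f * g) n =
      ∑ p ∈ Finset.HasAntidiagonal.antidiagonal n, taylorCoeffZero f p.1 * taylorCoeffZero g p.2 := by
  rw [taylorCoeffZero, iteratedDeriv_mul (contDiffAt_zero_of_differentiableOn_ball hf n)
    (contDiffAt_zero_of_differentiableOn_ball hg n), Finset.sum_div,
    Finset.Nat.sum_antidiagonal_eq_sum_range_succ
      (fun i j ↦ taylorCoeffZero f i * taylorCoeffZero g j)]
  refine Finset.sum_congr rfl fun i hi ↦ ?_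
  have hi' : i ≤ n := Nat.lt_succ_iff.mp (Finset.mem_range.mp hi)
  simp only [taylorCoeffZero]
  rw [Nat.cast_choose ℂ hi']
  have hn : (n.factorial : ℂ) ≠ 0 := Nat.cast_ne_zero.mpr n.factorial_ne_zero
  field_simp

lemma taylorCoeffZero_id_mul {f : ℂ → ℂ} (hf : DifferentiableOn ℂ f (ball 0 1)) (n : ℕ) :
    taylorCoeffZero ((fun z ↦ z) * f) (n + 1) = taylorCoeffZero f n := by
  rw [taylorCoeffZero_mul differentiable_fun_id.differentiableOn hf, Finset.sum_eq_single (1, n)]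
  · simp [taylorCoeffZero]
  · rintro ⟨i, j⟩ hij hne
    have hij' : i + j = n + 1 := by simpa using hij
    have hi : i ≠ 1 := by
      rintro rfl
      exact hne (by simp; omega)
    simp [taylorCoeffZero, iteratedDeriv_fun_id_zero, hi]
  · intro h
    exact absurd (by simp [add_comm]) h

lemma integral_mul_circleMap_inv_pow {f : ℂ → ℂ} (hf : DifferentiableOn ℂ f (ball 0 1))
    {R : ℝ} (h0 : 0 < R) (h1 : R < 1) (n : ℕ) :
    ∫ θ in (0 : ℝ)..2 * Real.pi, f (circleMap 0 R θ) * (circleMap 0 R θ ^ n)⁻¹ =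
      2 * Real.pi * taylorCoeffZero f n := by
  have hc : DifferentiableOn ℂ f (closedBall 0 R) := hf.mono (closedBall_subset_ball h1)
  have key := Complex.circleIntegral_one_div_sub_center_pow_smul_of_differentiable_on_off_countable
    (c := 0) (f := f) h0 n Set.countable_empty hc.continuousOn
    (fun z hz ↦ (hc z (ball_subset_closedBall hz.1)).differentiableAt
      (closedBall_mem_nhds_of_mem hz.1))
  rw [circleIntegral] at key
  have hI : (∫ θ in (0 : ℝ)..2 * Real.pi, deriv (circleMap 0 R) θ •
      (1 / (circleMap 0 R θ - 0) ^ (n + 1)) • f (circleMap 0 R θ)) =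
      Complex.I * ∫ θ in (0 : ℝ)..2 * Real.pi,
        f (circleMap 0 R θ) * (circleMap 0 R θ ^ n)⁻¹ := by
    rw [← intervalIntegral.integral_const_mul]
    refine intervalIntegral.integral_congr fun θ _ ↦ ?_
    have : circleMap 0 R θ ≠ 0 := circleMap_ne_center h0.ne'
    simp only [deriv_circleMap, smul_eq_mul, sub_zero]
    field_simp
    ring
  rw [hI, smul_eq_mul] at key
  apply mul_left_cancel₀ Complex.I_ne_zero
  rw [key, taylorCoeffZero]
  ring

lemma exists_norm_add_mul_eq (w x : ℂ) : ∃ u : ℂ, ‖u‖ = 1 ∧ ‖w + u * x‖ = ‖w‖ + ‖x‖ := by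
  by_cases hw : w = 0
  · exact ⟨1, by simp, by simp [hw]⟩
  by_cases hx : x = 0
  · exact ⟨1, by simp, by simp [hx]⟩
  have hw' := norm_ne_zero_iff.mpr hw
  have hx' := norm_ne_zero_iff.mpr hx
  have hwC : (‖w‖ : ℂ) ≠ 0 := by exact_mod_cast hw'
  refine ⟨w * ‖x‖ / (‖w‖ * x), by simp [hw', hx'], ?_⟩
  have : w + w * ‖x‖ / (‖w‖ * x) * x = w * ((1 + ‖x‖ / ‖w‖ : ℝ) : ℂ) := by
    push_cast; field_simp
  rw [this, norm_mul, Complex.norm_real, Real.norm_of_nonneg (by positivity)]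
  field_simp

lemma integral_mul_fejer {f : ℂ → ℂ} (hf : DifferentiableOn ℂ f (ball 0 1))
    {R : ℝ} (h0 : 0 < R) (h1 : R < 1) {n : ℕ} (hn : n ≠ 0) (u v : ℂ) :
    ∫ θ in (0 : ℝ)..2 * Real.pi, f (circleMap 0 R θ) *
        (2 + v * circleMap 0 R θ ^ n + u * (circleMap 0 R θ ^ n)⁻¹) =
      2 * Real.pi * (2 * f 0 + u * taylorCoeffZero f n) := by
  have hcont : Continuous fun θ ↦ f (circleMap 0 R θ) :=
    hf.continuousOn.comp_continuous (continuous_circleMap 0 R) fun θ ↦ by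
      simp [abs_of_pos h0, h1]
  have hne : ∀ θ, circleMap 0 R θ ^ n ≠ 0 := fun θ ↦ pow_ne_zero _ (circleMap_ne_center h0.ne')
  have hpow : Continuous fun θ ↦ circleMap 0 R θ ^ n := (continuous_circleMap 0 R).pow n
  have hinv := hpow.inv₀ hne
  have e0 := integral_mul_circleMap_inv_pow hf h0 h1 0
  have en := integral_mul_circleMap_inv_pow hf h0 h1 n
  have ep := integral_mul_circleMap_inv_pow (hf.mul (differentiableOn_pow n)) h0 h1 0
  simp only [taylorCoeffZero_zero, pow_zero, inv_one, mul_one, Pi.mul_apply, ne_eq, hn,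
    not_false_eq_true, zero_pow, mul_zero] at e0 ep
  have : ∀ θ, f (circleMap 0 R θ) *
        (2 + v * circleMap 0 R θ ^ n + u * (circleMap 0 R θ ^ n)⁻¹) =
      2 * f (circleMap 0 R θ) + v * (f (circleMap 0 R θ) * circleMap 0 R θ ^ n) +
        u * (f (circleMap 0 R θ) * (circleMap 0 R θ ^ n)⁻¹) := fun θ ↦ by ring
  simp_rw [this]
  rw [intervalIntegral.integral_add, intervalIntegral.integral_add,
    intervalIntegral.integral_const_mul, intervalIntegral.integral_const_mul,
    intervalIntegral.integral_const_mul, e0, en, ep]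
  · ring
  · exact (continuous_const.mul hcont).intervalIntegrable _ _
  · exact (continuous_const.mul (hcont.mul hpow)).intervalIntegrable _ _
  · exact ((continuous_const.mul hcont).add
      (continuous_const.mul (hcont.mul hpow))).intervalIntegrable _ _
  · exact (continuous_const.mul (hcont.mul hinv)).intervalIntegrable _ _

lemma norm_taylorCoeffZero_mul_pow_le {f : ℂ → ℂ} (hf : DifferentiableOn ℂ f (ball 0 1))
    (hb : ∀ z ∈ ball (0 : ℂ) 1, ‖f z‖ ≤ 1)
    {R : ℝ} (h0 : 0 < R) (h1 : R < 1) {n : ℕ} (hn : n ≠ 0) :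
    2 * ‖f 0‖ + R ^ n * ‖taylorCoeffZero f n‖ ≤ 2 := by
  obtain ⟨u, hu, hux⟩ := exists_norm_add_mul_eq (2 * f 0) (R ^ n * taylorCoeffZero f n)
  set W : ℝ → ℂ := fun θ ↦ 2 + (u * R ^ n)⁻¹ * circleMap 0 R θ ^ n +
    (u * R ^ n) * (circleMap 0 R θ ^ n)⁻¹ with hW
  have hne : ∀ θ, circleMap 0 R θ ^ n ≠ 0 := fun θ ↦ pow_ne_zero _ (circleMap_ne_center h0.ne')
  have hpow : Continuous fun θ ↦ circleMap 0 R θ ^ n := (continuous_circleMap 0 R).pow n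
  have hinv := hpow.inv₀ hne
  have hWc : Continuous W := by fun_prop
  have hcont : Continuous fun θ ↦ f (circleMap 0 R θ) :=
    hf.continuousOn.comp_continuous (continuous_circleMap 0 R) fun θ ↦ by
      simp [abs_of_pos h0, h1]
  have hWnorm : ∀ θ, ‖W θ‖ = (W θ).re := by
    intro θ
    set t : ℂ := (u * R ^ n)⁻¹ * circleMap 0 R θ ^ n with ht
    have htn : ‖t‖ = 1 := by
      simp [ht, hu, abs_of_pos h0, h0.ne']
    have hWt : W θ = ((2 + 2 * t.re : ℝ) : ℂ) := by
      have hti : (u * R ^ n) * (circleMap 0 R θ ^ n)⁻¹ = (starRingEnd ℂ) t := by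
        rw [← Complex.inv_eq_conj htn, ht, mul_inv, inv_inv]
      rw [hW]
      simp only [← ht, hti]
      rw [add_assoc, Complex.add_conj]
      push_cast; ring
    have hre : -1 ≤ t.re := by
      have := Complex.abs_re_le_norm t
      rw [htn] at this
      exact (abs_le.mp this).1
    rw [hWt, Complex.norm_real, Complex.ofReal_re, Real.norm_of_nonneg (by linarith)]
  have hWint : ∫ θ in (0 : ℝ)..2 * Real.pi, ‖W θ‖ = 4 * Real.pi := by
    have := integral_mul_fejer (f := fun _ ↦ 1) (differentiableOn_const _) h0 h1 hn
      (u * R ^ n) (u * R ^ n)⁻¹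
    have h1' : taylorCoeffZero (fun _ ↦ 1) n = 0 := by
      simp [taylorCoeffZero, iteratedDeriv_const, hn]
    simp only [one_mul, h1'] at this
    simp_rw [hWnorm]
    have h2 := Complex.reCLM.intervalIntegral_comp_comm
      (hWc.intervalIntegrable (μ := MeasureTheory.volume) 0 (2 * Real.pi))
    simp only [Complex.reCLM_apply] at h2
    rw [h2, hW, this]
    simp
    ring
  have hfW := integral_mul_fejer hf h0 h1 hn (u * R ^ n) (u * R ^ n)⁻¹
  have hle : ‖∫ θ in (0 : ℝ)..2 * Real.pi, f (circleMap 0 R θ) * W θ‖ ≤ 4 * Real.pi := by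
    rw [← hWint]
    refine (intervalIntegral.norm_integral_le_integral_norm Real.two_pi_pos.le).trans ?_
    refine intervalIntegral.integral_mono_on Real.two_pi_pos.le
      ((hcont.mul hWc).norm.intervalIntegrable _ _)
      (hWc.norm.intervalIntegrable _ _) fun θ _ ↦ ?_
    rw [norm_mul]
    exact mul_le_of_le_one_left (norm_nonneg _) (hb _ (by simp [abs_of_pos h0, h1]))
  rw [hW, hfW, mul_assoc u, norm_mul, hux] at hle
  simp [abs_of_pos h0, abs_of_pos Real.pi_pos] at hle
  nlinarith [Real.pi_pos]

lemma norm_taylorCoeffZero_le {f : ℂ → ℂ} (hf : DifferentiableOn ℂ f (ball 0 1))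
    (hb : ∀ z ∈ ball (0 : ℂ) 1, ‖f z‖ ≤ 1) {n : ℕ} (hn : n ≠ 0) :
    ‖taylorCoeffZero f n‖ ≤ 2 * (1 - ‖f 0‖) := by
  have hlim : Filter.Tendsto (fun R : ℝ ↦ 2 * ‖f 0‖ + R ^ n * ‖taylorCoeffZero f n‖)
      (nhdsWithin 1 (Set.Iio 1)) (nhds (2 * ‖f 0‖ + 1 ^ n * ‖taylorCoeffZero f n‖)) :=
    (Continuous.tendsto (by fun_prop) 1).mono_left nhdsWithin_le_nhds
  have := le_of_tendsto hlim (b := 2) (by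
    filter_upwards [Ioo_mem_nhdsLT (zero_lt_one' ℝ)] with R hR
    exact norm_taylorCoeffZero_mul_pow_le hf hb hR.1 hR.2 hn)
  rw [one_pow] at this
  linarith

lemma summable_mul_pow_of_le {b : ℕ → ℝ} {C r : ℝ} (hb0 : ∀ n, 0 ≤ b n) (hb : ∀ n, b n ≤ C)
    (h0 : 0 ≤ r) (h1 : r < 1) : Summable fun n ↦ b n * r ^ n :=
  Summable.of_nonneg_of_le (fun n ↦ mul_nonneg (hb0 n) (pow_nonneg h0 n))
    (fun n ↦ mul_le_mul_of_nonneg_right (hb n) (pow_nonneg h0 n))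
    ((summable_geometric_of_lt_one h0 h1).mul_left C)

lemma norm_taylorCoeffZero_le_two {f : ℂ → ℂ} (hf : DifferentiableOn ℂ f (ball 0 1))
    (hb : ∀ z ∈ ball (0 : ℂ) 1, ‖f z‖ ≤ 1) (n : ℕ) : ‖taylorCoeffZero f n‖ ≤ 2 := by
  rcases eq_or_ne n 0 with rfl | hn
  · rw [taylorCoeffZero_zero]
    linarith [hb 0 (by simp)]
  · linarith [norm_taylorCoeffZero_le hf hb hn, norm_nonneg (f 0)]

/-- The Bohr inequality. -/
lemma tsum_norm_taylorCoeffZero_mul_pow_le_one {f : ℂ → ℂ} (hf : DifferentiableOn ℂ f (ball 0 1))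
    (hb : ∀ z ∈ ball (0 : ℂ) 1, ‖f z‖ ≤ 1) {r : ℝ} (h0 : 0 ≤ r) (h1 : r ≤ 1 / 3) :
    ∑' n, ‖taylorCoeffZero f n‖ * r ^ n ≤ 1 := by
  have hs := summable_mul_pow_of_le (fun n ↦ norm_nonneg _)
    (norm_taylorCoeffZero_le_two hf hb) h0 (by linarith)
  have hf0 := hb 0 (by simp)
  have hgeo : HasSum (fun n ↦ 2 * (1 - ‖f 0‖) * r * r ^ n) (2 * (1 - ‖f 0‖) * r * (1 - r)⁻¹) :=
    (hasSum_geometric_of_lt_one h0 (by linarith)).mul_left _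
  have htail : ∑' n, ‖taylorCoeffZero f (n + 1)‖ * r ^ (n + 1) ≤
      2 * (1 - ‖f 0‖) * r * (1 - r)⁻¹ := by
    rw [← hgeo.tsum_eq]
    refine ((summable_nat_add_iff 1).mpr hs).tsum_le_tsum (fun n ↦ ?_) hgeo.summable
    rw [pow_succ', ← mul_assoc]
    gcongr
    exact norm_taylorCoeffZero_le hf hb n.succ_ne_zero
  have hr : 2 * r * (1 - r)⁻¹ ≤ 1 := by
    rw [← div_eq_mul_inv, div_le_one (by linarith)]
    linarith
  rw [hs.tsum_eq_zero_add, taylorCoeffZero_zero, pow_zero, mul_one]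
  nlinarith

lemma tsum_norm_taylorCoeffZero_mul_le {f g : ℂ → ℂ} (hf : DifferentiableOn ℂ f (ball 0 1))
    (hg : DifferentiableOn ℂ g (ball 0 1)) {r : ℝ} (h0 : 0 ≤ r)
    (hsf : Summable fun n ↦ ‖taylorCoeffZero f n‖ * r ^ n)
    (hsg : Summable fun n ↦ ‖taylorCoeffZero g n‖ * r ^ n) :
    ∑' n, ‖taylorCoeffZero (f * g) n‖ * r ^ n ≤
      (∑' n, ‖taylorCoeffZero f n‖ * r ^ n) * ∑' n, ‖taylorCoeffZero g n‖ * r ^ n := by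
  have hprod := summable_norm_sum_mul_antidiagonal_of_summable_norm hsf.norm hsg.norm
  rw [tsum_mul_tsum_eq_tsum_sum_antidiagonal_of_summable_norm hsf.norm hsg.norm]
  have hle : ∀ n, ‖taylorCoeffZero (f * g) n‖ * r ^ n ≤ ∑ p ∈ Finset.HasAntidiagonal.antidiagonal n,
      ‖taylorCoeffZero f p.1‖ * r ^ p.1 * (‖taylorCoeffZero g p.2‖ * r ^ p.2) := by
    intro n
    rw [taylorCoeffZero_mul hf hg]
    refine (mul_le_mul_of_nonneg_right (norm_sum_le _ _) (pow_nonneg h0 n)).trans_eq ?_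
    rw [Finset.sum_mul]
    refine Finset.sum_congr rfl fun p hp ↦ ?_
    rw [← Finset.HasAntidiagonal.mem_antidiagonal.mp hp, pow_add, norm_mul]
    ring
  exact Summable.tsum_le_tsum hle
    (Summable.of_nonneg_of_le (fun n ↦ by positivity) hle hprod.of_norm) hprod.of_norm

lemma norm_sub_lt_norm_one_sub_conj_mul {a w : ℂ} (ha : ‖a‖ < 1) (hw : ‖w‖ < 1) :
    ‖w - a‖ < ‖1 - (starRingEnd ℂ) a * w‖ := by
  rw [← sq_lt_sq₀ (norm_nonneg _) (norm_nonneg _)]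
  have key : ‖1 - (starRingEnd ℂ) a * w‖ ^ 2 - ‖w - a‖ ^ 2 = (1 - ‖a‖ ^ 2) * (1 - ‖w‖ ^ 2) := by
    simp only [Complex.sq_norm, Complex.normSq_apply]
    simp
    ring
  have h1 : 0 < 1 - ‖a‖ ^ 2 := by nlinarith [norm_nonneg a]
  have h2 : 0 < 1 - ‖w‖ ^ 2 := by nlinarith [norm_nonneg w]
  nlinarith [mul_pos h1 h2]

/-- The Schwarz lemma for the Möbius transform of `h` sending `h 0` to `0`. -/
lemma exists_sub_eq_mul_mul_one_sub {h : ℂ → ℂ} (hd : DifferentiableOn ℂ h (ball 0 1))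
    (hb : ∀ z ∈ ball (0 : ℂ) 1, ‖h z‖ < 1) :
    ∃ g : ℂ → ℂ, DifferentiableOn ℂ g (ball 0 1) ∧ (∀ z ∈ ball (0 : ℂ) 1, ‖g z‖ ≤ 1) ∧
      ∀ z ∈ ball (0 : ℂ) 1, h z - h 0 = z * (g z * (1 - (starRingEnd ℂ) (h 0) * h z)) := by
  have hlt : ∀ z ∈ ball (0 : ℂ) 1, ‖h z - h 0‖ < ‖1 - (starRingEnd ℂ) (h 0) * h z‖ :=
    fun z hz ↦ norm_sub_lt_norm_one_sub_conj_mul (hb 0 (by simp)) (hb z hz)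
  have hne : ∀ z ∈ ball (0 : ℂ) 1, 1 - (starRingEnd ℂ) (h 0) * h z ≠ 0 := fun z hz ↦
    norm_pos_iff.mp ((norm_nonneg _).trans_lt (hlt z hz))
  set ω : ℂ → ℂ := fun z ↦ (h z - h 0) / (1 - (starRingEnd ℂ) (h 0) * h z) with hω
  have hω0 : ω 0 = 0 := by simp [hω]
  have hωd : DifferentiableOn ℂ ω (ball 0 1) :=
    (hd.sub_const _).div ((hd.const_mul _).const_sub _) hne
  have hmaps : Set.MapsTo ω (ball 0 1) (closedBall (ω 0) 1) := by
    intro z hz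
    rw [hω0, mem_closedBall_zero_iff, hω, norm_div]
    exact div_le_one_of_le₀ (hlt z hz).le (norm_nonneg _)
  refine ⟨dslope ω 0, ?_, fun z hz ↦ ?_, fun z hz ↦ ?_⟩
  · exact (Complex.differentiableOn_dslope (ball_mem_nhds 0 one_pos)).mpr hωd
  · simpa using Complex.norm_dslope_le_div_of_mapsTo_ball hωd hmaps hz
  · have := sub_smul_dslope ω 0 z
    rw [sub_zero, hω0, sub_zero, smul_eq_mul] at this
    rw [← mul_assoc, this, hω]
    exact (div_mul_cancel₀ _ (hne z hz)).symm

/-- Coefficient-sum estimate `∑_{n≥1} |aₙ| rⁿ ≤ (1-a²)r/(1-ar)` for `r ≤ 1/3`. -/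
theorem coeff_sum_estimate (h : ℂ → ℂ)
    (hd : DifferentiableOn ℂ h (Metric.ball (0 : ℂ) 1))
    (hb : ∀ z : ℂ, ‖z‖ < 1 → ‖h z‖ < 1)
    (r : ℝ) (hr : r ∈ Set.Icc (0 : ℝ) (1 / 3)) :
    ∑' n : ℕ, ‖iteratedDeriv (n + 1) h 0 / (Nat.factorial (n + 1) : ℂ)‖ * r ^ (n + 1) ≤
      (1 - ‖h 0‖ ^ 2) * r / (1 - ‖h 0‖ * r) := by
  obtain ⟨h0, h1⟩ := hr
  have hr1 : r < 1 := by linarith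
  have hb' : ∀ z ∈ ball (0 : ℂ) 1, ‖h z‖ < 1 := fun z hz ↦ hb z (by simpa using hz)
  have ha : ‖h 0‖ < 1 := hb 0 (by simp)
  obtain ⟨g, hgd, hg1, hgh⟩ := exists_sub_eq_mul_mul_one_sub hd hb'
  set K : ℂ → ℂ := fun z ↦ 1 - (starRingEnd ℂ) (h 0) * h z with hK
  have hKd : DifferentiableOn ℂ K (ball 0 1) := (hd.const_mul _).const_sub _
  have hcoeff : ∀ n, taylorCoeffZero h (n + 1) = taylorCoeffZero (g * K) n := by
    intro n
    rw [← taylorCoeffZero_id_mul (hgd.mul hKd)]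
    have heq : h =ᶠ[nhds 0] fun z ↦ h 0 + ((fun z : ℂ ↦ z) * (g * K)) z := by
      filter_upwards [ball_mem_nhds (0 : ℂ) one_pos] with z hz
      simp only [Pi.mul_apply, hK, ← hgh z hz]
      ring
    rw [taylorCoeffZero, heq.iteratedDeriv_eq, iteratedDeriv_const_add n.succ_pos,
      taylorCoeffZero]
  have hK0 : taylorCoeffZero K 0 = ((1 - ‖h 0‖ ^ 2 : ℝ) : ℂ) := by
    rw [taylorCoeffZero_zero, hK]
    simp [Complex.conj_mul']
  have hKn : ∀ n, ‖taylorCoeffZero K (n + 1)‖ = ‖h 0‖ * ‖taylorCoeffZero h (n + 1)‖ := by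
    intro n
    have : taylorCoeffZero K (n + 1) =
        -((starRingEnd ℂ) (h 0) * taylorCoeffZero h (n + 1)) := by
      rw [taylorCoeffZero, hK, iteratedDeriv_const_sub n.succ_pos, iteratedDeriv_neg,
        iteratedDeriv_const_mul_field, taylorCoeffZero]
      ring
    rw [this, norm_neg, norm_mul, RCLike.norm_conj]
  have hsh := summable_mul_pow_of_le (fun n ↦ norm_nonneg _)
    (norm_taylorCoeffZero_le_two hd fun z hz ↦ (hb' z hz).le) h0 hr1
  have hsg := summable_mul_pow_of_le (fun n ↦ norm_nonneg _)
    (norm_taylorCoeffZero_le_two hgd hg1) h0 hr1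
  have hsh' := (summable_nat_add_iff 1).mpr hsh
  have hKn' : ∀ n, ‖taylorCoeffZero K (n + 1)‖ * r ^ (n + 1) =
      ‖h 0‖ * (‖taylorCoeffZero h (n + 1)‖ * r ^ (n + 1)) := fun n ↦ by rw [hKn, mul_assoc]
  have hsK : Summable fun n ↦ ‖taylorCoeffZero K n‖ * r ^ n := by
    rw [← summable_nat_add_iff 1]
    simp_rw [hKn']
    exact hsh'.mul_left _
  change ∑' n : ℕ, ‖taylorCoeffZero h (n + 1)‖ * r ^ (n + 1) ≤ _
  set S := ∑' n : ℕ, ‖taylorCoeffZero h (n + 1)‖ * r ^ (n + 1) with hS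
  have hMK : ∑' n, ‖taylorCoeffZero K n‖ * r ^ n = (1 - ‖h 0‖ ^ 2) + ‖h 0‖ * S := by
    rw [hsK.tsum_eq_zero_add, hK0, Complex.norm_real,
      Real.norm_of_nonneg (by nlinarith [norm_nonneg (h 0)]), pow_zero, mul_one]
    simp_rw [hKn']
    rw [tsum_mul_left]
  have hSr : S = r * ∑' n, ‖taylorCoeffZero (g * K) n‖ * r ^ n := by
    rw [hS, ← tsum_mul_left]
    refine tsum_congr fun n ↦ ?_
    rw [hcoeff, pow_succ]
    ring
  have hMgK := tsum_norm_taylorCoeffZero_mul_le hgd hKd h0 hsg hsK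
  have hMg := tsum_norm_taylorCoeffZero_mul_pow_le_one hgd hg1 h0 h1
  have hK_nonneg : 0 ≤ ∑' n, ‖taylorCoeffZero K n‖ * r ^ n := tsum_nonneg fun n ↦ by positivity
  have hfin : S ≤ r * ((1 - ‖h 0‖ ^ 2) + ‖h 0‖ * S) := by
    rw [← hMK, hSr]
    exact mul_le_mul_of_nonneg_left (hMgK.trans (mul_le_of_le_one_left hK_nonneg hMg)) h0
  rw [le_div_iff₀ (by nlinarith [norm_nonneg (h 0)])]
  linarith
end
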